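/- arXiv:0903.3446 — 4 statements merged into one kernel-verified Lean document; each statement's English description precedes it below -/
import Mathlib

section
/- Fix λ' > 0 and for ξ' ∈ ℝ^N let u(y; ξ') = (λ'/(λ'² + |y−ξ'|²))^{(N−4)/2}. Consider the pointwise expression E(y, ξ') = Σ_{i,j,s,t=1}^N H̄_{tj}(y) H̄_{it}(y) (∂_i∂_s∂_s u)(y; ξ') (∂_j u)(y; ξ') (derivatives in y). Then: (i) ∫_{ℝ^N} E(y, 0) dy = 0; and (ii) for all p, q ∈ {1,…,N}, ∫_{ℝ^N} [∂²E/∂ξ'_p∂ξ'_q](y, ξ')|_{ξ'=0} dy = |S^{N−1}| · (Σ_{i,j,k=1}^N (W_{ikjp}+W_{ipjk})(W_{ikjq}+W_{iqjk})) · λ'^{N−4} · [(N−2)(N−4)²/(N(N+2))] · ∫₀^∞ f(r²)² [ N r^{N+5}/(λ'²+r²)^N − (N+2) r^{N+3}/(λ'²+r²)^{N−1} ] dr. -/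
open scoped BigOperators
open MeasureTheory

noncomputable section

/-- The partial derivative `∂f/∂y_i` of a function on Euclidean space. -/
def pd (N : ℕ) (i : Fin N) (f : EuclideanSpace ℝ (Fin N) → ℝ) :
    EuclideanSpace ℝ (Fin N) → ℝ :=
  fun y => fderiv ℝ f y (EuclideanSpace.single i 1)

/-- `H_{ij}(y) = Σ_{p,q} W_{ipjq} y_p y_q`. -/
def Hmat (N : ℕ) (W : Fin N → Fin N → Fin N → Fin N → ℝ) (i j : Fin N)
    (y : EuclideanSpace ℝ (Fin N)) : ℝ :=
  ∑ p : Fin N, ∑ q : Fin N, W i p j q * y p * y q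

/-- `H̄_{ij}(y) = f(|y|²) H_{ij}(y)`. -/
def Hbar (N : ℕ) (W : Fin N → Fin N → Fin N → Fin N → ℝ) (f : ℝ → ℝ) (i j : Fin N)
    (y : EuclideanSpace ℝ (Fin N)) : ℝ :=
  f (‖y‖ ^ 2) * Hmat N W i j y

/-- The surface measure on the unit sphere `S^{N-1} ⊂ ℝ^N`. -/
def sphereMeasure (N : ℕ) :
    Measure (Metric.sphere (0 : EuclideanSpace ℝ (Fin N)) 1) :=
  (volume : Measure (EuclideanSpace ℝ (Fin N))).toSphere

/-- `|S^{N-1}|`, the total surface measure of the unit sphere in `ℝ^N`. -/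
def sphereArea (N : ℕ) : ℝ := (sphereMeasure N Set.univ).toReal

/-- The second mixed derivative `∂²F/∂ξ_p∂ξ_q` at `ξ = 0` of a function of `ξ ∈ ℝ^N`. -/
def d2Param (N : ℕ) (p q : Fin N) (F : EuclideanSpace ℝ (Fin N) → ℝ) : ℝ :=
  deriv (fun a : ℝ =>
    deriv (fun b : ℝ =>
      F (a • EuclideanSpace.single p (1 : ℝ) + b • EuclideanSpace.single q (1 : ℝ))) 0) 0


section Moments

variable {N : ℕ}

lemma coord_abs_le (y : EuclideanSpace ℝ (Fin N)) (a : Fin N) : |y a| ≤ ‖y‖ := by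
  simpa using PiLp.norm_apply_le y a

lemma normsq_eq (y : EuclideanSpace ℝ (Fin N)) : ‖y‖ ^ 2 = ∑ a, y a ^ 2 :=
  EuclideanSpace.real_norm_sq_eq y

/-- Polar coordinates for a 4-homogeneous function times a radial function. -/
lemma polar4 (hN : 0 < N) (Q : EuclideanSpace ℝ (Fin N) → ℝ)
    (hQ : ∀ (r : ℝ) y, Q (r • y) = r ^ 4 * Q y) (φ : ℝ → ℝ) :
    ∫ y : EuclideanSpace ℝ (Fin N), Q y * φ ‖y‖ =
      (∫ z, Q z.1 ∂(sphereMeasure N)) * ∫ r in Set.Ioi (0 : ℝ), r ^ (N + 3) * φ r := by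
  have : Nonempty (Fin N) := ⟨⟨0, hN⟩⟩
  have hdim : Module.finrank ℝ (EuclideanSpace ℝ (Fin N)) = N := by simp
  set μ : Measure (EuclideanSpace ℝ (Fin N)) := volume with hμ
  calc
    ∫ y : EuclideanSpace ℝ (Fin N), Q y * φ ‖y‖ = 
        ∫ x : ({(0)}ᶜ : Set (EuclideanSpace ℝ (Fin N))), Q x.1 * φ (‖x.1‖) ∂(μ.comap (↑)) := by
      rw [integral_subtype_comap (measurableSet_singleton _).compl fun x ↦ Q x * φ (‖x‖),
        restrict_compl_singleton]
    _ = ∫ x, Q x.1.1 * (x.2.1 ^ 4 * φ x.2.1) ∂μ.toSphere.prod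
          (.volumeIoiPow (Module.finrank ℝ (EuclideanSpace ℝ (Fin N)) - 1)) := by
      rw [← μ.measurePreserving_homeomorphUnitSphereProd.integral_comp
        (Homeomorph.measurableEmbedding _)]
      congr 1
      ext x
      have hx : ‖x.1‖ ≠ 0 := norm_ne_zero_iff.2 x.2
      simp only [homeomorphUnitSphereProd_apply_fst_coe, homeomorphUnitSphereProd_apply_snd_coe]
      rw [hQ]
      field_simp
    _ = (∫ z, Q z.1 ∂(sphereMeasure N)) * ∫ x : Set.Ioi (0 : ℝ), (x.1 ^ 4 * φ x.1)
          ∂.volumeIoiPow (Module.finrank ℝ (EuclideanSpace ℝ (Fin N)) - 1) :=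
      integral_prod_mul (fun z : Metric.sphere (0 : EuclideanSpace ℝ (Fin N)) 1 => Q z.1)
        (fun x : Set.Ioi (0 : ℝ) => x.1 ^ 4 * φ x.1)
    _ = _ := by
      congr 1
      simp only [Measure.volumeIoiPow, ENNReal.ofReal]
      rw [integral_withDensity_eq_integral_smul, 
        integral_subtype_comap measurableSet_Ioi
          fun a ↦ Real.toNNReal (a ^ (Module.finrank ℝ (EuclideanSpace ℝ (Fin N)) - 1)) •
            (a ^ 4 * φ a),
        setIntegral_congr_fun measurableSet_Ioi fun x hx ↦ ?_]
      · simp only [hdim]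
        rw [NNReal.smul_def, Real.coe_toNNReal _ (pow_nonneg hx.out.le _), smul_eq_mul,
          ← mul_assoc, ← pow_add]
        congr 2
        omega
      · exact (measurable_subtype_coe.pow_const _).real_toNNReal

/-- Gaussian weight. -/
def gw (N : ℕ) (y : EuclideanSpace ℝ (Fin N)) : ℝ := Real.exp (-(1/2 : ℝ) * ‖y‖ ^ 2)

lemma gw_cont : Continuous (gw N) := by unfold gw; fun_prop

lemma gw_int (hN : 0 < N) (k : ℕ) :
    Integrable (fun y : EuclideanSpace ℝ (Fin N) => ‖y‖ ^ k * gw N y) := by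
  have : Nonempty (Fin N) := ⟨⟨0, hN⟩⟩
  have := (integrable_fun_norm_addHaar (volume : Measure (EuclideanSpace ℝ (Fin N)))
    (f := fun r : ℝ => r ^ k * Real.exp (-(1/2 : ℝ) * r ^ 2))).2 ?_
  · exact this
  · have h := integrableOn_rpow_mul_exp_neg_mul_sq (b := 1/2) (by norm_num)
      (s := ((Module.finrank ℝ (EuclideanSpace ℝ (Fin N)) - 1 + k : ℕ) : ℝ))
      (by have : (0:ℝ) ≤ ((Module.finrank ℝ (EuclideanSpace ℝ (Fin N)) - 1 + k : ℕ) : ℝ) := by positivity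
          linarith)
    refine h.congr_fun (fun x hx => ?_) measurableSet_Ioi
    simp only [Real.rpow_natCast, smul_eq_mul, pow_add]
    ring

lemma gw_int_of_le (hN : 0 < N) (k : ℕ) (Q : EuclideanSpace ℝ (Fin N) → ℝ) (hc : Continuous Q)
    (hb : ∀ y, |Q y| ≤ ‖y‖ ^ k) : Integrable (fun y => Q y * gw N y) := by
  refine (gw_int hN k).mono' (hc.mul gw_cont).aestronglyMeasurable (Filter.Eventually.of_forall ?_)
  intro y
  have h0 : 0 < gw N y := Real.exp_pos _
  rw [Real.norm_eq_abs, abs_mul, abs_of_pos h0]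
  exact mul_le_mul_of_nonneg_right (hb y) h0.le

lemma coord_cont (a : Fin N) : Continuous (fun y : EuclideanSpace ℝ (Fin N) => y a) := by
  fun_prop

lemma gw_lineDeriv (a : Fin N) (y : EuclideanSpace ℝ (Fin N)) :
    HasLineDerivAt ℝ (gw N) (-(y a) * gw N y) y (EuclideanSpace.single a 1) := by
  have h : HasFDerivAt (gw N) _ y :=
    (((hasStrictFDerivAt_norm_sq y).hasFDerivAt).const_mul (-(1/2 : ℝ))).exp
  have h2 := h.hasLineDerivAt (EuclideanSpace.single a 1)
  have e : (Real.exp (-(1/2 : ℝ) * ‖y‖ ^ 2) • (-(1/2 : ℝ)) • (2 : ℕ) • innerSL ℝ y)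
      (EuclideanSpace.single a 1) = -(y a) * gw N y := by
    simp [gw, EuclideanSpace.inner_single_right]
    ring
  rw [← e]
  exact h2

lemma coord_lineDeriv (a b : Fin N) (y : EuclideanSpace ℝ (Fin N)) :
    HasLineDerivAt ℝ (fun y : EuclideanSpace ℝ (Fin N) => y b) (if a = b then 1 else 0) y
      (EuclideanSpace.single a 1) := by
  have h : HasFDerivAt (fun y : EuclideanSpace ℝ (Fin N) => y b) _ y :=
    (EuclideanSpace.proj (𝕜 := ℝ) b).hasFDerivAt
  have h2 := h.hasLineDerivAt (EuclideanSpace.single a 1)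
  have e : (EuclideanSpace.proj (𝕜 := ℝ) b) (EuclideanSpace.single a (1:ℝ)) =
      (if a = b then 1 else 0 : ℝ) := by
    simp [eq_comm]
  rw [← e]
  exact h2

lemma stein (a : Fin N) (Q Q' : EuclideanSpace ℝ (Fin N) → ℝ)
    (hd : ∀ y, HasLineDerivAt ℝ Q (Q' y) y (EuclideanSpace.single a 1))
    (h1 : Integrable (fun y => Q' y * gw N y)) (h2 : Integrable (fun y => (y a * Q y) * gw N y))
    (h3 : Integrable (fun y => Q y * gw N y)) :
    ∫ y, (y a * Q y) * gw N y = ∫ y, Q' y * gw N y := by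
  have := integral_bilinear_hasLineDerivAt_right_eq_neg_left_of_integrable
    (μ := (volume : Measure (EuclideanSpace ℝ (Fin N))))
    (f := Q) (f' := Q') (g := gw N) (g' := fun y => -(y a) * gw N y)
    (v := EuclideanSpace.single a 1) (B := ContinuousLinearMap.mul ℝ ℝ) 
    (by simpa using h1) (by
      refine h2.neg.congr (Filter.Eventually.of_forall fun y => ?_)
      simp; ring) (by simpa using h3) (fun x _ => hd x) (fun x _ => gw_lineDeriv a x)
  simp only [ContinuousLinearMap.mul_apply'] at this
  rw [← neg_inj, ← this, ← integral_neg]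
  congr 1
  ext y
  ring

def dl (a b : Fin N) : ℝ := if a = b then 1 else 0

lemma moment2 (hN : 0 < N) (a b : Fin N) :
    ∫ y : EuclideanSpace ℝ (Fin N), (y a * y b) * gw N y = dl a b * ∫ y, gw N y := by
  rw [stein a (fun y => y b) (fun _ => dl a b) (fun y => coord_lineDeriv a b y),
    integral_const_mul]
  · refine Integrable.const_mul ?_ _
    simpa using gw_int (N := N) hN 0
  · refine gw_int_of_le hN 2 _ (by fun_prop) fun y => ?_
    rw [abs_mul, pow_two]
    gcongr <;> apply coord_abs_le
  · refine gw_int_of_le hN 1 _ (by fun_prop) fun y => ?_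
    simpa using coord_abs_le y b

lemma int2 (hN : 0 < N) (a b : Fin N) :
    Integrable (fun y : EuclideanSpace ℝ (Fin N) => (y a * y b) * gw N y) := by
  refine gw_int_of_le hN 2 _ (by fun_prop) fun y => ?_
  rw [abs_mul, pow_two]
  gcongr <;> apply coord_abs_le

lemma int4 (hN : 0 < N) (a b c d : Fin N) :
    Integrable (fun y : EuclideanSpace ℝ (Fin N) => (y a * (y b * (y c * y d))) * gw N y) := by
  refine gw_int_of_le hN 4 _ (by fun_prop) fun y => ?_
  rw [abs_mul, abs_mul, abs_mul, show ‖y‖ ^ 4 = ‖y‖ * (‖y‖ * (‖y‖ * ‖y‖)) by ring]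
  gcongr <;> apply coord_abs_le

lemma moment4 (hN : 0 < N) (a b c d : Fin N) :
    ∫ y : EuclideanSpace ℝ (Fin N), (y a * (y b * (y c * y d))) * gw N y =
      (dl a b * dl c d + dl a c * dl b d + dl a d * dl b c) * ∫ y, gw N y := by
  have e : ∀ y : EuclideanSpace ℝ (Fin N), 
      (dl a b * (y c * y d) + y b * (dl a c * y d + y c * dl a d)) * gw N y =
      dl a b * ((y c * y d) * gw N y) + dl a c * ((y b * y d) * gw N y)
        + dl a d * ((y b * y c) * gw N y) := fun y => by ring
  have i1 := (int2 hN c d).const_mul (dl a b)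
  have i2 := (int2 hN b d).const_mul (dl a c)
  have i3 := (int2 hN b c).const_mul (dl a d)
  rw [stein a (fun y => y b * (y c * y d))
    (fun y => dl a b * (y c * y d) + y b * (dl a c * y d + y c * dl a d))]
  · simp_rw [e]
    rw [integral_add (by exact i1.add i2) i3, integral_add i1 i2]
    simp_rw [integral_const_mul, moment2 hN]
    ring
  · intro y
    have := (HasDerivAt.mul (coord_lineDeriv a b y)
      (HasDerivAt.mul (coord_lineDeriv a c y) (coord_lineDeriv a d y)))
    simp only [zero_smul, add_zero, Pi.mul_apply] at this
    exact this
  · simp_rw [e]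
    exact (i1.add i2).add i3
  · exact int4 hN a b c d
  · refine gw_int_of_le hN 3 _ (by fun_prop) fun y => ?_
    rw [abs_mul, abs_mul, show ‖y‖ ^ 3 = (‖y‖ * (‖y‖ * ‖y‖)) by ring]
    gcongr <;> apply coord_abs_le

lemma sphere4 (hN : 0 < N) (a b c d : Fin N) :
    ∫ z, z.1 a * (z.1 b * (z.1 c * z.1 d)) ∂(sphereMeasure N) =
      sphereArea N / (N * (N + 2)) * (dl a b * dl c d + dl a c * dl b d + dl a d * dl b c) := by
  have hM : 0 < ∫ y, gw N y := by
    have hi : Integrable (gw N) := by simpa using gw_int (N := N) hN 0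
    refine (integral_pos_iff_support_of_nonneg (fun y => (Real.exp_pos _).le) hi).2 ?_
    have : Function.support (gw N) = Set.univ := by
      ext y; simp [gw, Real.exp_ne_zero]
    change 0 < volume (Function.support (gw N))
    rw [this]
    exact isOpen_univ.measure_pos _ ⟨0, trivial⟩
  have P1 := polar4 hN (fun y => y a * (y b * (y c * y d)))
    (fun r y => by simp; ring) (fun r => Real.exp (-(1/2 : ℝ) * r ^ 2))
  have P2 := polar4 hN (fun y => ‖y‖ ^ 4)
    (fun r y => by rw [norm_smul, mul_pow]; congr 1; exact Even.pow_abs (by decide) r)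
    (fun r => Real.exp (-(1/2 : ℝ) * r ^ 2))
  have hS : ∫ z, ‖z.1‖ ^ 4 ∂(sphereMeasure N) = sphereArea N := by
    simp [sphereArea, Measure.real]
  have hL2 : ∫ y : EuclideanSpace ℝ (Fin N), ‖y‖ ^ 4 * gw N y = (N * (N + 2)) * ∫ y, gw N y := by
    have e : ∀ y : EuclideanSpace ℝ (Fin N), ‖y‖ ^ 4 * gw N y =
        ∑ a, ∑ b, (y a * (y a * (y b * y b))) * gw N y := by
      intro y
      rw [show ‖y‖ ^ 4 = ‖y‖ ^ 2 * ‖y‖ ^ 2 by ring, normsq_eq, Finset.sum_mul_sum, Finset.sum_mul]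
      refine Finset.sum_congr rfl fun a _ => ?_
      rw [Finset.sum_mul]
      refine Finset.sum_congr rfl fun b _ => ?_
      ring
    simp_rw [e]
    rw [integral_finsetSum _ fun a _ => integrable_finsetSum _ fun b _ => int4 hN a a b b]
    simp_rw [integral_finsetSum _ fun b _ => int4 hN _ _ b b, moment4 hN, ← Finset.sum_mul]
    congr 1
    simp [dl, Finset.sum_add_distrib]
    ring
  have e1 := moment4 hN a b c d
  have hNr : (0:ℝ) < N := by exact_mod_cast hN
  unfold gw at *
  rw [hL2, hS] at P2
  rw [e1] at P1
  set R := ∫ r in Set.Ioi (0 : ℝ), r ^ (N + 3) * Real.exp (-(1/2 : ℝ) * r ^ 2)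
  set M := ∫ y : EuclideanSpace ℝ (Fin N), Real.exp (-(1/2 : ℝ) * ‖y‖ ^ 2)
  have hR : R ≠ 0 := by
    rintro h
    rw [h, mul_zero] at P2
    have : 0 < (N * (N + 2)) * M := by positivity
    linarith
  have : (N * (N + 2) : ℝ) ≠ 0 := by positivity
  set I := ∫ z, z.1 a * (z.1 b * (z.1 c * z.1 d)) ∂(sphereMeasure N)
  rw [div_mul_eq_mul_div, eq_div_iff this]
  apply mul_right_cancel₀ hR
  linear_combination (-(N * (N + 2) : ℝ)) * P1 + (dl a b * dl c d + dl a c * dl b d + dl a d * dl b c) * P2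

end Moments

section Derivs

variable {N : ℕ}

/-- `f` is differentiable with `i`-th partial derivative `g`. -/
def HasPd (i : Fin N) (f g : EuclideanSpace ℝ (Fin N) → ℝ) : Prop :=
  ∀ y, ∃ L : EuclideanSpace ℝ (Fin N) →L[ℝ] ℝ,
    HasFDerivAt f L y ∧ L (EuclideanSpace.single i 1) = g y

lemma HasPd.pd {i : Fin N} {f g : EuclideanSpace ℝ (Fin N) → ℝ} (h : HasPd i f g) :
    pd N i f = g := by
  ext y
  obtain ⟨L, h1, h2⟩ := h y
  rw [_root_.pd, h1.fderiv, h2]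

lemma HasPd.mul {i : Fin N} {f g f' g' : EuclideanSpace ℝ (Fin N) → ℝ} (h : HasPd i f g)
    (h' : HasPd i f' g') : HasPd i (fun y => f y * f' y) (fun y => g y * f' y + f y * g' y) := by
  intro y
  obtain ⟨L, h1, h2⟩ := h y
  obtain ⟨L', h1', h2'⟩ := h' y
  refine ⟨_, h1.mul h1', ?_⟩
  simp [h2, h2']
  ring

lemma HasPd.add {i : Fin N} {f g f' g' : EuclideanSpace ℝ (Fin N) → ℝ} (h : HasPd i f g)
    (h' : HasPd i f' g') : HasPd i (fun y => f y + f' y) (fun y => g y + g' y) := by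
  intro y
  obtain ⟨L, h1, h2⟩ := h y
  obtain ⟨L', h1', h2'⟩ := h' y
  exact ⟨_, h1.add h1', by simp [h2, h2']⟩

lemma HasPd.const_mul {i : Fin N} {f g : EuclideanSpace ℝ (Fin N) → ℝ} (c : ℝ) (h : HasPd i f g) :
    HasPd i (fun y => c * f y) (fun y => c * g y) := by
  intro y
  obtain ⟨L, h1, h2⟩ := h y
  exact ⟨_, h1.const_mul c, by simp [h2]⟩

lemma hasPd_coord (i j : Fin N) (ξ : EuclideanSpace ℝ (Fin N)) :
    HasPd i (fun y => y j - ξ j) (fun _ => dl i j) := by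
  intro y
  have h : HasFDerivAt (fun y : EuclideanSpace ℝ (Fin N) => y j) _ y :=
    (EuclideanSpace.proj (𝕜 := ℝ) j).hasFDerivAt
  exact ⟨_, h.sub_const _, by simp [dl, eq_comm]⟩

/-- Powers of `λ² + |y-ξ|²`. -/
def rh (l : ℝ) (ξ : EuclideanSpace ℝ (Fin N)) (s : ℝ) (y : EuclideanSpace ℝ (Fin N)) : ℝ :=
  (l ^ 2 + ‖y - ξ‖ ^ 2) ^ s

lemma hasPd_rh {l : ℝ} (hl : 0 < l) (ξ : EuclideanSpace ℝ (Fin N)) (s : ℝ) (i : Fin N) :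
    HasPd i (rh l ξ s) (fun y => (2 * s) * ((y i - ξ i) * rh l ξ (s - 1) y)) := by
  intro y
  have h0 : HasFDerivAt (fun y : EuclideanSpace ℝ (Fin N) => y - ξ) _ y :=
    (hasFDerivAt_id (𝕜 := ℝ) y).sub_const ξ
  have h : HasFDerivAt (fun y : EuclideanSpace ℝ (Fin N) => l ^ 2 + ‖y - ξ‖ ^ 2) _ y :=
    (h0.norm_sq).const_add (l ^ 2)
  have hp : l ^ 2 + ‖y - ξ‖ ^ 2 ≠ 0 := by positivity
  refine ⟨_, h.rpow_const (Or.inl hp), ?_⟩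
  simp [rh, EuclideanSpace.inner_single_right]
  ring

lemma rh_mul {l : ℝ} (hl : 0 < l) (ξ y : EuclideanSpace ℝ (Fin N)) (s t : ℝ) :
    rh l ξ s y * rh l ξ t y = rh l ξ (s + t) y := by
  have hp : 0 < l ^ 2 + ‖y - ξ‖ ^ 2 := by positivity
  simp only [rh]
  rw [Real.rpow_add hp]

/-- Third derivatives `∂_i ∂_s ∂_s`, then summed over `s`. -/
lemma third {l : ℝ} (hl : 0 < l) (ξ : EuclideanSpace ℝ (Fin N)) (c m : ℝ) (i : Fin N)
    (y : EuclideanSpace ℝ (Fin N)) :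
    ∑ s, pd N i (pd N s (pd N s (fun y => c * rh l ξ m y))) y =
      c * (y i - ξ i) * (4 * m * (m - 1) * (N + 2) * rh l ξ (m - 2) y
        + 8 * m * (m - 1) * (m - 2) * ‖y - ξ‖ ^ 2 * rh l ξ (m - 3) y) := by
  have h (s : Fin N) : pd N i (pd N s (pd N s (fun y => c * rh l ξ m y))) y =
      c * (y i - ξ i) * (4 * m * (m - 1) * rh l ξ (m - 2) y
        + 8 * m * (m - 1) * (m - 2) * (y s - ξ s) ^ 2 * rh l ξ (m - 3) y)
        + c * 8 * m * (m - 1) * rh l ξ (m - 2) y * (dl i s * (y s - ξ s)) := by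
    rw [((hasPd_rh hl ξ m s).const_mul c).pd]
    rw [((((hasPd_coord s s ξ).mul (hasPd_rh hl ξ (m - 1) s)).const_mul (2 * m)).const_mul c).pd]
    rw [((((((hasPd_rh hl ξ (m - 1) i).const_mul (dl s s)).add
      ((hasPd_coord i s ξ).mul (((hasPd_coord i s ξ).mul
        (hasPd_rh hl ξ (m - 1 - 1) i)).const_mul (2 * (m-1))))).const_mul (2 * m)).const_mul c)).pd]
    rw [show m - 1 - 1 = m - 2 by ring, show m - 2 - 1 = m - 3 by ring]
    simp only [dl, if_true]
    ring
  simp_rw [h, Finset.sum_add_distrib, ← Finset.mul_sum, Finset.sum_add_distrib, ← Finset.sum_mul,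
    ← Finset.mul_sum, normsq_eq]
  simp [dl]
  ring

/-- The radial factor. -/
def Gf (N : ℕ) (l : ℝ) (x : ℝ) : ℝ :=
  l ^ (N - 4) * (-2 * ((N:ℝ) - 4) ^ 2 * ((N:ℝ) - 2)) *
    (1 / (l ^ 2 + x) ^ (N - 1) + (N:ℝ) / 2 * l ^ 2 / (l ^ 2 + x) ^ N)

lemma prodG (hN : 25 ≤ N) {l : ℝ} (hl : 0 < l) (ξ y : EuclideanSpace ℝ (Fin N)) (i j : Fin N)
    (V : EuclideanSpace ℝ (Fin N) → ℝ)
    (hV : ∀ y, V y = (l / (l ^ 2 + ‖y - ξ‖ ^ 2)) ^ (((N : ℝ) - 4) / 2)) :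
    (∑ s, pd N i (pd N s (pd N s V)) y) * pd N j V y =
      (y i - ξ i) * (y j - ξ j) * Gf N l (‖y - ξ‖ ^ 2) := by
  have hV' : V = fun y => l ^ (((N : ℝ) - 4) / 2) * rh l ξ (-(((N : ℝ) - 4) / 2)) y := by
    ext y
    have hp : 0 < l ^ 2 + ‖y - ξ‖ ^ 2 := by positivity
    rw [hV, Real.div_rpow hl.le hp.le, rh, Real.rpow_neg hp.le, div_eq_mul_inv]
  set m : ℝ := ((N : ℝ) - 4) / 2 with hm
  have hNm : (N : ℝ) = 2 * m + 4 := by rw [hm]; ring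
  have hp : 0 < l ^ 2 + ‖y - ξ‖ ^ 2 := by positivity
  have hll : l ^ m * l ^ m = l ^ (N - 4) := by
    rw [← Real.rpow_add hl, ← Real.rpow_natCast, Nat.cast_sub (by omega)]
    congr 1
    rw [hm]; push_cast; ring
  have r0 : rh l ξ (-m - 3) y * (l ^ 2 + ‖y - ξ‖ ^ 2) = rh l ξ (-m - 2) y := by
    simp only [rh]
    rw [← Real.rpow_add_one hp.ne']
    congr 1; ring
  have r1 : rh l ξ (-m - 2) y * rh l ξ (-m - 1) y = 1 / (l ^ 2 + ‖y - ξ‖ ^ 2) ^ (N - 1) := by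
    rw [rh_mul hl, rh, one_div, ← Real.rpow_natCast (l ^ 2 + ‖y - ξ‖ ^ 2) (N - 1), ← Real.rpow_neg hp.le,
      Nat.cast_sub (by omega)]
    congr 1
    rw [hm]; push_cast; ring
  have r2 : rh l ξ (-m - 3) y * rh l ξ (-m - 1) y = 1 / (l ^ 2 + ‖y - ξ‖ ^ 2) ^ N := by
    rw [rh_mul hl, rh, one_div, ← Real.rpow_natCast (l ^ 2 + ‖y - ξ‖ ^ 2) N, ← Real.rpow_neg hp.le]
    congr 1
    rw [hm]; ring
  rw [hV', third hl, ((hasPd_rh hl ξ (-m) j).const_mul _).pd]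
  rw [Gf, mul_div_assoc, ← mul_one_div (l ^ 2), ← r1, ← r2, ← hll, hNm]
  linear_combination (l ^ m * (y i - ξ i) * (8 * -m * (-m - 1) * (-m - 2))) * 
    (l ^ m * (2 * -m * ((y j - ξ j) * rh l ξ (-m - 1) y))) * r0

end Derivs

section Second

lemma slope_lemma (g : ℝ → ℝ) (hg : ContinuousAt g 0) : HasDerivAt (fun a => a * g a) (g 0) 0 := by
  rw [hasDerivAt_iff_tendsto_slope]
  have : Filter.Tendsto g (nhdsWithin 0 {0}ᶜ) (nhds (g 0)) := hg.tendsto.mono_left nhdsWithin_le_nhds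
  refine this.congr' ?_
  filter_upwards [self_mem_nhdsWithin] with a ha
  have ha' : a ≠ 0 := ha
  simp [slope_def_field]
  field_simp

lemma d2_lemma {N : ℕ} (p q : Fin N) (k : EuclideanSpace ℝ (Fin N) → ℝ) (hk : ContDiff ℝ 1 k)
    (F : EuclideanSpace ℝ (Fin N) → ℝ) (c : ℝ) (h : Fin N → Fin N → ℝ)
    (hF : ∀ ξ, F ξ = c * (∑ t, (∑ j, h t j * ξ j) ^ 2) * k ξ) :
    d2Param N p q F = 2 * c * (∑ t, h t p * h t q) * k 0 := by
  unfold d2Param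
  set ep : EuclideanSpace ℝ (Fin N) := EuclideanSpace.single p (1:ℝ)
  set eq : EuclideanSpace ℝ (Fin N) := EuclideanSpace.single q (1:ℝ)
  have hq : ∀ a b : ℝ, F (a • ep + b • eq) = (c * (a ^ 2 * ∑ t, h t p ^ 2 +
      2 * a * b * (∑ t, h t p * h t q) + b ^ 2 * ∑ t, h t q ^ 2)) * k (a • ep + b • eq) := by
    intro a b
    rw [hF]
    congr 2
    simp_rw [Finset.mul_sum, ← Finset.sum_add_distrib]
    refine Finset.sum_congr rfl fun t _ => ?_
    have : ∑ j, h t j * (a • ep + b • eq) j = a * h t p + b * h t q := by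
      simp [ep, eq, mul_add, Finset.sum_add_distrib]
      ring
    rw [this]; ring
  have hin : ∀ a : ℝ, deriv (fun b : ℝ => F (a • ep + b • eq)) 0 = 
      a * (c * (2 * (∑ t, h t p * h t q)) * k (a • ep) 
        + a * (c * (∑ t, h t p ^ 2) * fderiv ℝ k (a • ep) eq)) := by
    intro a
    have e1 : HasDerivAt (fun b : ℝ => (c * (a ^ 2 * ∑ t, h t p ^ 2 +
      2 * a * b * (∑ t, h t p * h t q) + b ^ 2 * ∑ t, h t q ^ 2)))
        (c * (2 * a * (∑ t, h t p * h t q))) 0 := by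
      have h1 : HasDerivAt (fun b : ℝ => b) 1 0 := hasDerivAt_id 0
      exact HasDerivAt.congr_deriv (((((h1.const_mul (2 * a)).mul_const (∑ t, h t p * h t q)).const_add 
        (a ^ 2 * ∑ t, h t p ^ 2)).add ((h1.pow 2).mul_const (∑ t, h t q ^ 2))).const_mul c) (by simp)
    have e2 : HasDerivAt (fun b : ℝ => k (a • ep + b • eq)) (fderiv ℝ k (a • ep) eq) 0 :=
      ((hk.differentiable (by norm_num)) (a • ep)).hasFDerivAt.hasLineDerivAt eq
    have e3 := (e1.mul e2).deriv
    have e4 : (fun b : ℝ => F (a • ep + b • eq)) = _ := funext fun b => hq a b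
    rw [e4]
    refine e3.trans ?_
    simp
    ring
  simp_rw [hin]
  have hc1 : Continuous fun a : ℝ => k (a • ep) := hk.continuous.comp (by fun_prop)
  have hc2 : Continuous fun a : ℝ => fderiv ℝ k (a • ep) eq :=
    ((hk.continuous_fderiv (by norm_num)).comp (by fun_prop : Continuous fun a : ℝ => a • ep)).clm_apply 
      continuous_const
  rw [(slope_lemma _ (Continuous.continuousAt (by fun_prop))).deriv]
  simp only [zero_smul, zero_mul, add_zero]
  ring

lemma Gf_contDiff {N : ℕ} {l : ℝ} (hl : 0 < l) (y : EuclideanSpace ℝ (Fin N)) :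
    ContDiff ℝ 1 (fun ξ : EuclideanSpace ℝ (Fin N) => Gf N l (‖y - ξ‖ ^ 2)) := by
  have h0 : ContDiff ℝ 1 (fun ξ : EuclideanSpace ℝ (Fin N) => l ^ 2 + ‖y - ξ‖ ^ 2) :=
    contDiff_const.add ((contDiff_const.sub contDiff_id).norm_sq ℝ)
  have hp : ∀ ξ : EuclideanSpace ℝ (Fin N), l ^ 2 + ‖y - ξ‖ ^ 2 ≠ 0 := fun ξ => by positivity
  unfold Gf
  refine contDiff_const.mul (ContDiff.add ?_ ?_)
  · exact contDiff_const.div (h0.pow _) fun ξ => pow_ne_zero _ (hp ξ)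
  · exact contDiff_const.div (h0.pow _) fun ξ => pow_ne_zero _ (hp ξ)

end Second

section Main

variable {N : ℕ}

lemma Hmat_symm (W : Fin N → Fin N → Fin N → Fin N → ℝ)
    (hW3 : ∀ i p j q, W i p j q = W j q i p) (i j : Fin N) (y : EuclideanSpace ℝ (Fin N)) :
    Hmat N W i j y = Hmat N W j i y := by
  unfold Hmat
  rw [Finset.sum_comm]
  refine Finset.sum_congr rfl fun q _ => Finset.sum_congr rfl fun p _ => ?_
  rw [hW3 i p j q]
  ring

lemma Hmat_mul_self (W : Fin N → Fin N → Fin N → Fin N → ℝ)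
    (hW2 : ∀ i p j q, W i p j q = - W i p q j) (t : Fin N) (y : EuclideanSpace ℝ (Fin N)) :
    ∑ j, Hmat N W t j y * y j = 0 := by
  have h : ∀ p : Fin N, ∑ j, ∑ q, W t p j q * y p * y q * y j = 0 := by
    intro p
    have e : ∑ j, ∑ q, W t p j q * y p * y q * y j = - ∑ j, ∑ q, W t p j q * y p * y q * y j := by
      conv_lhs => rw [Finset.sum_comm]
      simp_rw [← Finset.sum_neg_distrib]
      refine Finset.sum_congr rfl fun q _ => Finset.sum_congr rfl fun j _ => ?_
      rw [hW2 t p j q]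
      ring
    linarith
  unfold Hmat
  simp_rw [Finset.sum_mul]
  rw [Finset.sum_comm]
  exact Finset.sum_eq_zero fun p _ => h p

lemma E_form (hN : 25 ≤ N) (W : Fin N → Fin N → Fin N → Fin N → ℝ)
    (hW2 : ∀ i p j q, W i p j q = - W i p q j)
    (hW3 : ∀ i p j q, W i p j q = W j q i p)
    (f : ℝ → ℝ) {l : ℝ} (hl : 0 < l) (V : EuclideanSpace ℝ (Fin N) → ℝ)
    (ξ y : EuclideanSpace ℝ (Fin N))
    (hV : ∀ y, V y = (l / (l ^ 2 + ‖y - ξ‖ ^ 2)) ^ (((N : ℝ) - 4) / 2)) :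
    ∑ i : Fin N, ∑ j : Fin N, ∑ s : Fin N, ∑ t : Fin N,
            Hbar N W f t j y * Hbar N W f i t y
              * pd N i (pd N s (pd N s V)) y * pd N j V y =
      f (‖y‖ ^ 2) ^ 2 * (∑ t, (∑ j, Hmat N W t j y * ξ j) ^ 2) * Gf N l (‖y - ξ‖ ^ 2) := by
  have h1 : ∀ i j, ∑ s : Fin N, ∑ t : Fin N,
            Hbar N W f t j y * Hbar N W f i t y
              * pd N i (pd N s (pd N s V)) y * pd N j V y =
      ∑ t, (f (‖y‖ ^ 2) ^ 2 * Gf N l (‖y - ξ‖ ^ 2)) *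
        ((Hmat N W t i y * (y i - ξ i)) * (Hmat N W t j y * (y j - ξ j))) := by
    intro i j
    rw [Finset.sum_comm]
    refine Finset.sum_congr rfl fun t _ => ?_
    simp_rw [mul_assoc]
    rw [← Finset.mul_sum, ← Finset.mul_sum, ← Finset.sum_mul, prodG hN hl ξ y i j V hV]
    simp only [Hbar]
    rw [Hmat_symm W hW3 i t]
    ring
  have h2 : ∀ t, ∑ j, Hmat N W t j y * (y j - ξ j) = - ∑ j, Hmat N W t j y * ξ j := by
    intro t
    simp_rw [mul_sub]
    rw [Finset.sum_sub_distrib, Hmat_mul_self W hW2]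
    ring
  calc _ = ∑ i, ∑ j, ∑ t, (f (‖y‖ ^ 2) ^ 2 * Gf N l (‖y - ξ‖ ^ 2)) *
        ((Hmat N W t i y * (y i - ξ i)) * (Hmat N W t j y * (y j - ξ j))) :=
        Finset.sum_congr rfl fun i _ => Finset.sum_congr rfl fun j _ => h1 i j
    _ = ∑ t, ∑ i, ∑ j, (f (‖y‖ ^ 2) ^ 2 * Gf N l (‖y - ξ‖ ^ 2)) *
        ((Hmat N W t i y * (y i - ξ i)) * (Hmat N W t j y * (y j - ξ j))) := by
        rw [Finset.sum_congr rfl fun i _ => Finset.sum_comm]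
        rw [Finset.sum_comm]
    _ = ∑ t, (f (‖y‖ ^ 2) ^ 2 * Gf N l (‖y - ξ‖ ^ 2)) * (∑ j, Hmat N W t j y * ξ j) ^ 2 := by
        refine Finset.sum_congr rfl fun t _ => ?_
        simp_rw [← Finset.mul_sum]
        rw [← Finset.sum_mul, h2]
        ring
    _ = _ := by
        rw [← Finset.mul_sum]; ring

lemma contraction (W : Fin N → Fin N → Fin N → Fin N → ℝ)
    (hW1 : ∀ i p j q, W i p j q = - W p i j q)
    (hW2 : ∀ i p j q, W i p j q = - W i p q j)
    (hW3 : ∀ i p j q, W i p j q = W j q i p)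
    (hTrace : ∀ p q, ∑ i : Fin N, W i p i q = 0) (p q : Fin N) :
    ∑ t, ∑ a, ∑ b, ∑ c, ∑ d, W t a p b * W t c q d *
      (dl a b * dl c d + dl a c * dl b d + dl a d * dl b c) =
    (∑ i : Fin N, ∑ j : Fin N, ∑ k : Fin N,
                (W i k j p + W i p j k) * (W i k j q + W i q j k)) / 2 := by
  have tr : ∀ t p, ∑ a, W t a p a = 0 := by
    intro t p
    rw [← hTrace t p]
    refine Finset.sum_congr rfl fun a _ => ?_
    rw [hW1, hW2, neg_neg]
  have h1 : ∀ t, ∑ a, ∑ b, ∑ c, ∑ d, W t a p b * W t c q d *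
      (dl a b * dl c d + dl a c * dl b d + dl a d * dl b c) =
      ∑ a, ∑ b, W t a p b * (W t a q b + W t b q a) := by
    intro t
    have e : ∀ a b, ∑ c, ∑ d, W t a p b * W t c q d *
      (dl a b * dl c d + dl a c * dl b d + dl a d * dl b c) =
        W t a p b * (W t a q b + W t b q a) := by
      intro a b
      have : ∀ c d, W t a p b * W t c q d *
          (dl a b * dl c d + dl a c * dl b d + dl a d * dl b c) =
          (W t a p b * dl a b) * (dl c d * W t c q d) +
          W t a p b * (dl a c * (dl b d * W t c q d)) +
          W t a p b * (dl b c * (dl a d * W t c q d)) := fun c d => by ring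
      simp_rw [this, Finset.sum_add_distrib, ← Finset.mul_sum]
      simp [dl, tr]
      ring
    exact Finset.sum_congr rfl fun a _ => Finset.sum_congr rfl fun b _ => e a b
  simp_rw [h1]
  have h2 : ∀ i j k r, W i k j r = W k i r j := fun i j k r => by rw [hW1, hW2, neg_neg]
  have h3 : ∀ i j k r, W i r j k = W k j r i := fun i j k r => by rw [hW3, h2]
  have e2 : ∑ i : Fin N, ∑ j : Fin N, ∑ k : Fin N,
      (W i k j p + W i p j k) * (W i k j q + W i q j k) =
      ∑ k, ∑ i, ∑ j, (W k i p j + W k j p i) * (W k i q j + W k j q i) := by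
    rw [Finset.sum_congr rfl fun i _ => Finset.sum_comm]
    rw [Finset.sum_comm]
    refine Finset.sum_congr rfl fun k _ => Finset.sum_congr rfl fun i _ =>
      Finset.sum_congr rfl fun j _ => ?_
    rw [h2 i j k p, h2 i j k q, h3 i j k p, h3 i j k q]
  rw [e2, eq_div_iff two_ne_zero, Finset.sum_mul]
  refine Finset.sum_congr rfl fun k _ => ?_
  have e3 : ∑ i, ∑ j, (W k i p j + W k j p i) * (W k i q j + W k j q i) =
      ∑ i, ∑ j, W k i p j * (W k i q j + W k j q i) +
      ∑ i, ∑ j, W k j p i * (W k i q j + W k j q i) := by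
    simp_rw [← Finset.sum_add_distrib, add_mul]
  rw [e3, Finset.sum_comm (f := fun i j => W k j p i * (W k i q j + W k j q i)), mul_two]
  congr 1
  refine Finset.sum_congr rfl fun i _ => Finset.sum_congr rfl fun j _ => ?_
  ring

lemma sphereQ (hN : 0 < N) (W : Fin N → Fin N → Fin N → Fin N → ℝ)
    (hW1 : ∀ i p j q, W i p j q = - W p i j q)
    (hW2 : ∀ i p j q, W i p j q = - W i p q j)
    (hW3 : ∀ i p j q, W i p j q = W j q i p)
    (hTrace : ∀ p q, ∑ i : Fin N, W i p i q = 0) (p q : Fin N) :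
    ∫ z, (∑ t, Hmat N W t p z.1 * Hmat N W t q z.1) ∂(sphereMeasure N) =
      sphereArea N / (N * (N + 2)) *
    ((∑ i : Fin N, ∑ j : Fin N, ∑ k : Fin N,
                (W i k j p + W i p j k) * (W i k j q + W i q j k)) / 2) := by
  have : IsFiniteMeasure (sphereMeasure N) := by unfold sphereMeasure; infer_instance
  have hi : ∀ (C : ℝ) (a b c d : Fin N), Integrable
      (fun z : Metric.sphere (0 : EuclideanSpace ℝ (Fin N)) 1 =>
        C * (z.1 a * (z.1 b * (z.1 c * z.1 d)))) (sphereMeasure N) := by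
    intro C a b c d
    refine Continuous.integrable_of_hasCompactSupport (by fun_prop) ?_
    exact HasCompactSupport.of_compactSpace _
  have e : ∀ z : EuclideanSpace ℝ (Fin N), ∑ t, Hmat N W t p z * Hmat N W t q z =
      ∑ t, ∑ a, ∑ b, ∑ c, ∑ d, (W t a p b * W t c q d) * (z a * (z b * (z c * z d))) := by
    intro z
    refine Finset.sum_congr rfl fun t _ => ?_
    unfold Hmat
    rw [Finset.sum_mul]
    refine Finset.sum_congr rfl fun a _ => ?_
    rw [Finset.sum_mul]
    refine Finset.sum_congr rfl fun b _ => ?_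
    rw [Finset.mul_sum]
    refine Finset.sum_congr rfl fun c _ => ?_
    rw [Finset.mul_sum]
    refine Finset.sum_congr rfl fun d _ => ?_
    ring
  simp_rw [e]
  rw [← contraction W hW1 hW2 hW3 hTrace p q, Finset.mul_sum, integral_finsetSum]
  swap
  · exact fun t _ => integrable_finsetSum _ fun a _ => integrable_finsetSum _ fun b _ =>
      integrable_finsetSum _ fun c _ => integrable_finsetSum _ fun d _ => hi _ _ _ _ _
  refine Finset.sum_congr rfl fun t _ => ?_
  rw [Finset.mul_sum, integral_finsetSum]
  swap
  · exact fun a _ => integrable_finsetSum _ fun b _ =>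
      integrable_finsetSum _ fun c _ => integrable_finsetSum _ fun d _ => hi _ _ _ _ _
  refine Finset.sum_congr rfl fun a _ => ?_
  rw [Finset.mul_sum, integral_finsetSum]
  swap
  · exact fun b _ =>
      integrable_finsetSum _ fun c _ => integrable_finsetSum _ fun d _ => hi _ _ _ _ _
  refine Finset.sum_congr rfl fun b _ => ?_
  rw [Finset.mul_sum, integral_finsetSum]
  swap
  · exact fun c _ => integrable_finsetSum _ fun d _ => hi _ _ _ _ _
  refine Finset.sum_congr rfl fun c _ => ?_
  rw [Finset.mul_sum, integral_finsetSum]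
  swap
  · exact fun d _ => hi _ _ _ _ _
  refine Finset.sum_congr rfl fun d _ => ?_
  rw [integral_const_mul, sphere4 hN]
  ring

lemma Hmat_smul (W : Fin N → Fin N → Fin N → Fin N → ℝ) (i j : Fin N) (r : ℝ)
    (y : EuclideanSpace ℝ (Fin N)) : Hmat N W i j (r • y) = r ^ 2 * Hmat N W i j y := by
  unfold Hmat
  simp_rw [Finset.mul_sum]
  refine Finset.sum_congr rfl fun p _ => Finset.sum_congr rfl fun q _ => ?_
  simp
  ring

end Main

theorem stmt_14 (N : ℕ) (hN : 25 ≤ N)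
    (W : Fin N → Fin N → Fin N → Fin N → ℝ)
    (hW1 : ∀ i p j q, W i p j q = - W p i j q)
    (hW2 : ∀ i p j q, W i p j q = - W i p q j)
    (hW3 : ∀ i p j q, W i p j q = W j q i p)
    (hBianchi : ∀ i p j q, W i p j q + W i j q p + W i q p j = 0)
    (hTrace : ∀ p q, ∑ i : Fin N, W i p i q = 0)
    (f : ℝ → ℝ)
    (hf : ∃ P : Polynomial ℝ, P.degree ≤ 4 ∧ ∀ x, f x = P.eval x)
    (lam' : ℝ) (hlam' : 0 < lam')
    (U : EuclideanSpace ℝ (Fin N) → EuclideanSpace ℝ (Fin N) → ℝ)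
    (hU : ∀ ξ' y, U ξ' y = (lam' / (lam' ^ 2 + ‖y - ξ'‖ ^ 2)) ^ (((N : ℝ) - 4) / 2))
    (E : EuclideanSpace ℝ (Fin N) → EuclideanSpace ℝ (Fin N) → ℝ)
    (hE : ∀ y ξ', E y ξ'
        = ∑ i : Fin N, ∑ j : Fin N, ∑ s : Fin N, ∑ t : Fin N,
            Hbar N W f t j y * Hbar N W f i t y
              * pd N i (pd N s (pd N s (U ξ'))) y * pd N j (U ξ') y) :
    ((∫ y : EuclideanSpace ℝ (Fin N), E y 0) = 0) ∧
    (∀ p q : Fin N,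
      (∫ y : EuclideanSpace ℝ (Fin N), d2Param N p q (E y))
        = sphereArea N
            * (∑ i : Fin N, ∑ j : Fin N, ∑ k : Fin N,
                (W i k j p + W i p j k) * (W i k j q + W i q j k))
            * lam' ^ (N - 4)
            * (((N : ℝ) - 2) * ((N : ℝ) - 4) ^ 2 / (N * ((N : ℝ) + 2)))
            * ∫ r in Set.Ioi (0 : ℝ),
                f (r ^ 2) ^ 2
                  * ((N : ℝ) * r ^ (N + 5) / (lam' ^ 2 + r ^ 2) ^ N
                    - ((N : ℝ) + 2) * r ^ (N + 3) / (lam' ^ 2 + r ^ 2) ^ (N - 1))) := by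
  have hform : ∀ y ξ, E y ξ = f (‖y‖ ^ 2) ^ 2 * (∑ t, (∑ j, Hmat N W t j y * ξ j) ^ 2)
      * Gf N lam' (‖y - ξ‖ ^ 2) := by
    intro y ξ
    rw [hE]
    exact E_form hN W hW2 hW3 f hlam' (U ξ) ξ y (hU ξ)
  refine ⟨?_, ?_⟩
  · have : ∀ y, E y 0 = 0 := fun y => by simp [hform]
    simp [this]
  · intro p q
    have hd : ∀ y, d2Param N p q (E y) =
        (∑ t, Hmat N W t p y * Hmat N W t q y) *
          (fun r : ℝ => 2 * f (r ^ 2) ^ 2 * Gf N lam' (r ^ 2)) ‖y‖ := by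
      intro y
      rw [d2_lemma p q (fun ξ => Gf N lam' (‖y - ξ‖ ^ 2)) (Gf_contDiff hlam' y) (E y)
        (f (‖y‖ ^ 2) ^ 2) (fun t j => Hmat N W t j y) (hform y)]
      simp only [sub_zero]
      ring
    simp_rw [hd]
    have hN0 : 0 < N := by omega
    rw [polar4 hN0 (fun y => ∑ t, Hmat N W t p y * Hmat N W t q y) (fun r y => by
      rw [Finset.mul_sum]
      refine Finset.sum_congr rfl fun t _ => ?_
      rw [Hmat_smul, Hmat_smul]
      ring) (fun r : ℝ => 2 * f (r ^ 2) ^ 2 * Gf N lam' (r ^ 2))]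
    rw [sphereQ hN0 W hW1 hW2 hW3 hTrace p q]
    have hI : ∫ r in Set.Ioi (0 : ℝ), r ^ (N + 3) * (2 * f (r ^ 2) ^ 2 * Gf N lam' (r ^ 2)) =
        (2 * lam' ^ (N - 4) * ((N : ℝ) - 2) * ((N : ℝ) - 4) ^ 2) *
        ∫ r in Set.Ioi (0 : ℝ),
                f (r ^ 2) ^ 2
                  * ((N : ℝ) * r ^ (N + 5) / (lam' ^ 2 + r ^ 2) ^ N
                    - ((N : ℝ) + 2) * r ^ (N + 3) / (lam' ^ 2 + r ^ 2) ^ (N - 1)) := by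
      rw [← integral_const_mul]
      congr 1
      ext r
      have hp : lam' ^ 2 + r ^ 2 ≠ 0 := by positivity
      obtain ⟨n, rfl⟩ : ∃ n, N = n + 1 := ⟨N - 1, by omega⟩
      simp only [Gf, Nat.add_sub_cancel]
      rw [pow_succ (lam' ^ 2 + r ^ 2) n]
      field_simp
      ring
    rw [hI]
    have hNr : (N : ℝ) ≠ 0 := by positivity
    have hNr2 : (N : ℝ) + 2 ≠ 0 := by positivity
    field_simp
end
end

section
/- Fix λ' > 0 and for ξ' ∈ ℝ^N let u(y; ξ') = (λ'/(λ'² + |y−ξ'|²))^{(N−4)/2}. Consider the pointwise expression E(y, ξ') = Σ_{i,j,s,t=1}^N H̄_{ij}(y) H̄_{st}(y) (∂_i∂_j u)(y; ξ') (∂_s∂_t u)(y; ξ') (derivatives in y). Then ∫_{ℝ^N} E(y, 0) dy = 0, and for all p, q ∈ {1,…,N}, ∫_{ℝ^N} [∂²E/∂ξ'_p∂ξ'_q](y, ξ')|_{ξ'=0} dy = 0. -/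
open scoped BigOperators
open MeasureTheory

noncomputable section

lemma pd_pow_aux (N : ℕ) (l : ℝ) (hl : 0 < l) (ξ : EuclideanSpace ℝ (Fin N)) (r : ℝ)
    (y : EuclideanSpace ℝ (Fin N)) :
    HasFDerivAt (fun y : EuclideanSpace ℝ (Fin N) => (l ^ 2 + ‖y - ξ‖ ^ 2) ^ r)
      ((r * (l ^ 2 + ‖y - ξ‖ ^ 2) ^ (r - 1)) • ((2 : ℝ) • innerSL ℝ (y - ξ))) y := by
  have hpos : 0 < l ^ 2 + ‖y - ξ‖ ^ 2 := by positivity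
  have h1 : HasFDerivAt (fun y : EuclideanSpace ℝ (Fin N) => l ^ 2 + ‖y - ξ‖ ^ 2)
      ((2 : ℝ) • innerSL ℝ (y - ξ)) y := by
    have h := ((hasFDerivAt_id (𝕜 := ℝ) y).sub_const ξ).norm_sq.const_add (l ^ 2)
    have he : (2 : ℝ) • innerSL ℝ (y - ξ) = 2 • (innerSL ℝ (id y - ξ)).comp
        (ContinuousLinearMap.id ℝ (EuclideanSpace ℝ (Fin N))) := by
      ext v
      simp
    rw [he]
    exact h
  exact h1.rpow_const (Or.inl hpos.ne')

lemma pd1_aux (N : ℕ) (l : ℝ) (hl : 0 < l) (ξ : EuclideanSpace ℝ (Fin N)) (c r : ℝ)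
    (j : Fin N) :
    pd N j (fun y => c * (l ^ 2 + ‖y - ξ‖ ^ 2) ^ r)
      = fun y => (2 * c * r) * (l ^ 2 + ‖y - ξ‖ ^ 2) ^ (r - 1) * (y j - ξ j) := by
  funext y
  unfold pd
  rw [((pd_pow_aux N l hl ξ r y).const_mul c).fderiv]
  simp [EuclideanSpace.inner_single_right, real_inner_comm]
  ring

lemma pd2_aux (N : ℕ) (l : ℝ) (hl : 0 < l) (ξ : EuclideanSpace ℝ (Fin N)) (c r : ℝ)
    (i j : Fin N) (y : EuclideanSpace ℝ (Fin N)) :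
    pd N i (fun y => c * (l ^ 2 + ‖y - ξ‖ ^ 2) ^ r * (y j - ξ j)) y
      = (2 * c * r) * (l ^ 2 + ‖y - ξ‖ ^ 2) ^ (r - 1) * ((y i - ξ i) * (y j - ξ j))
        + c * (l ^ 2 + ‖y - ξ‖ ^ 2) ^ r * (if i = j then 1 else 0) := by
  unfold pd
  have h2 : HasFDerivAt (fun y : EuclideanSpace ℝ (Fin N) => y j - ξ j)
      (EuclideanSpace.proj j : EuclideanSpace ℝ (Fin N) →L[ℝ] ℝ) y :=
    (EuclideanSpace.proj j : EuclideanSpace ℝ (Fin N) →L[ℝ] ℝ).hasFDerivAt.sub_const (ξ j)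
  have h3 := ((pd_pow_aux N l hl ξ r y).const_mul c).mul h2
  erw [h3.fderiv]
  simp [EuclideanSpace.inner_single_right, real_inner_comm, Pi.single_apply, eq_comm]
  ring

/-- The quadratic form `H(y)(ξ, ξ)`. -/
def Qf (N : ℕ) (A : Fin N → Fin N → ℝ) (ξ : EuclideanSpace ℝ (Fin N)) : ℝ :=
  ∑ i, ∑ j, A i j * (ξ i * ξ j)

lemma Qf_line (N : ℕ) (A : Fin N → Fin N → ℝ) (p q : Fin N) (a b : ℝ) :
    Qf N A (a • EuclideanSpace.single p (1 : ℝ) + b • EuclideanSpace.single q (1 : ℝ))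
      = a ^ 2 * A p p + a * b * (A p q + A q p) + b ^ 2 * A q q := by
  unfold Qf
  simp [Pi.single_apply, mul_add, add_mul, Finset.sum_add_distrib]
  ring

lemma d2_aux (N : ℕ) (A : Fin N → Fin N → ℝ) (G F : EuclideanSpace ℝ (Fin N) → ℝ)
    (hG : ContDiff ℝ 1 G) (hF : ∀ ξ, F ξ = G ξ * (Qf N A ξ) ^ 2) (p q : Fin N) :
    d2Param N p q F = 0 := by
  unfold d2Param
  set ep : EuclideanSpace ℝ (Fin N) := EuclideanSpace.single p (1 : ℝ) with hep
  set eq : EuclideanSpace ℝ (Fin N) := EuclideanSpace.single q (1 : ℝ) with heq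
  have hD : ∀ a : ℝ, deriv (fun b : ℝ => F (a • ep + b • eq)) 0
      = a ^ 2 * (fderiv ℝ G (a • ep) eq * (a ^ 2 * A p p ^ 2)
          + G (a • ep) * (2 * A p p * (a * (A p q + A q p)))) := by
    intro a
    have e : (fun b : ℝ => F (a • ep + b • eq)) = fun b : ℝ => G (a • ep + b • eq)
        * (a ^ 2 * A p p + a * b * (A p q + A q p) + b ^ 2 * A q q) ^ 2 := by
      funext b
      rw [hF, Qf_line]
    rw [e]
    have hl : HasDerivAt (fun b : ℝ => a • ep + b • eq) eq 0 := by
      simpa using ((hasDerivAt_id (0 : ℝ)).smul_const eq).const_add (a • ep)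
    have hg : HasDerivAt (fun b : ℝ => G (a • ep + b • eq)) (fderiv ℝ G (a • ep) eq) 0 := by
      have h0 : HasFDerivAt G (fderiv ℝ G (a • ep)) (a • ep + (0 : ℝ) • eq) := by
        simpa using (hG.differentiable (by norm_num) (a • ep)).hasFDerivAt
      exact h0.comp_hasDerivAt 0 hl
    have hp : HasDerivAt (fun b : ℝ =>
        (a ^ 2 * A p p + a * b * (A p q + A q p) + b ^ 2 * A q q))
        (a * (A p q + A q p)) 0 := by
      have := ((((hasDerivAt_id (0 : ℝ)).const_mul a).mul_const (A p q + A q p)).const_add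
        (a ^ 2 * A p p)).add (((hasDerivAt_id (0 : ℝ)).pow 2).mul_const (A q q))
      have e3 : a * (A p q + A q p) = a * 1 * (A p q + A q p)
          + ((2 : ℕ) : ℝ) * (id (0 : ℝ)) ^ (2 - 1) * 1 * A q q := by simp
      rw [e3]
      exact this
    refine (hg.mul (hp.pow 2)).deriv.trans ?_
    simp
    ring
  simp only [hD]
  set K : ℝ → ℝ := fun a => a * (fderiv ℝ G (a • ep) eq * (a ^ 2 * A p p ^ 2)
          + G (a • ep) * (2 * A p p * (a * (A p q + A q p)))) with hK
  have hKc : Continuous K := by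
    have h1 : Continuous (fun a : ℝ => fderiv ℝ G (a • ep)) :=
      (hG.continuous_fderiv (by norm_num)).comp (by fun_prop)
    have h2 : Continuous (fun a : ℝ => fderiv ℝ G (a • ep) eq) := h1.clm_apply continuous_const
    have h3 : Continuous (fun a : ℝ => G (a • ep)) := hG.continuous.comp (by fun_prop)
    fun_prop
  refine HasDerivAt.deriv (f' := 0) ?_
  rw [hasDerivAt_iff_tendsto_slope]
  have hlim : Filter.Tendsto K (nhdsWithin 0 {0}ᶜ) (nhds 0) := by
    have := (hKc.tendsto 0).mono_left (nhdsWithin_le_nhds (s := {0}ᶜ))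
    simpa [hK] using this
  refine hlim.congr' ?_
  filter_upwards [self_mem_nhdsWithin] with a ha
  have ha' : a ≠ 0 := ha
  simp only [slope_def_field, hK]
  field_simp
  ring

theorem stmt_15 (N : ℕ) (hN : 25 ≤ N)
    (W : Fin N → Fin N → Fin N → Fin N → ℝ)
    (hW1 : ∀ i p j q, W i p j q = - W p i j q)
    (hW2 : ∀ i p j q, W i p j q = - W i p q j)
    (hW3 : ∀ i p j q, W i p j q = W j q i p)
    (hBianchi : ∀ i p j q, W i p j q + W i j q p + W i q p j = 0)
    (hTrace : ∀ p q, ∑ i : Fin N, W i p i q = 0)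
    (f : ℝ → ℝ)
    (hf : ∃ P : Polynomial ℝ, P.degree ≤ 4 ∧ ∀ x, f x = P.eval x)
    (lam' : ℝ) (hlam' : 0 < lam')
    (U : EuclideanSpace ℝ (Fin N) → EuclideanSpace ℝ (Fin N) → ℝ)
    (hU : ∀ ξ' y, U ξ' y = (lam' / (lam' ^ 2 + ‖y - ξ'‖ ^ 2)) ^ (((N : ℝ) - 4) / 2))
    (E : EuclideanSpace ℝ (Fin N) → EuclideanSpace ℝ (Fin N) → ℝ)
    (hE : ∀ y ξ', E y ξ'
        = ∑ i : Fin N, ∑ j : Fin N, ∑ s : Fin N, ∑ t : Fin N,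
            Hbar N W f i j y * Hbar N W f s t y
              * pd N i (pd N j (U ξ')) y * pd N s (pd N t (U ξ')) y) :
    ((∫ y : EuclideanSpace ℝ (Fin N), E y 0) = 0) ∧
    (∀ p q : Fin N, (∫ y : EuclideanSpace ℝ (Fin N), d2Param N p q (E y)) = 0) := by
  obtain ⟨P, -, -⟩ := hf
  set m : ℝ := ((N : ℝ) - 4) / 2 with hm
  have hUf : ∀ ξ, U ξ = fun y => lam' ^ m * (lam' ^ 2 + ‖y - ξ‖ ^ 2) ^ (-m) := by
    intro ξ
    funext y
    have hpos : 0 < lam' ^ 2 + ‖y - ξ‖ ^ 2 := by positivity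
    rw [hU, Real.div_rpow hlam'.le hpos.le, Real.rpow_neg hpos.le, div_eq_mul_inv]
  have hHtr : ∀ y, ∑ i, Hmat N W i i y = 0 := by
    intro y
    unfold Hmat
    rw [Finset.sum_comm]
    refine Finset.sum_eq_zero fun p _ => ?_
    rw [Finset.sum_comm]
    refine Finset.sum_eq_zero fun q _ => ?_
    rw [← Finset.sum_mul, ← Finset.sum_mul, hTrace]
    simp
  have hHr : ∀ y i, ∑ j, Hmat N W i j y * y j = 0 := by
    intro y i
    have h1 : ∑ j, Hmat N W i j y * y j
        = ∑ p, ∑ j, ∑ q, W i p j q * y p * y q * y j := by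
      unfold Hmat
      simp only [Finset.sum_mul]
      rw [Finset.sum_comm]
    rw [h1]
    refine Finset.sum_eq_zero fun p _ => ?_
    have h2 : ∑ j, ∑ q, W i p j q * y p * y q * y j
        = - ∑ j, ∑ q, W i p j q * y p * y q * y j := by
      conv_lhs => rw [Finset.sum_comm]
      rw [← Finset.sum_neg_distrib]
      refine Finset.sum_congr rfl fun j _ => ?_
      rw [← Finset.sum_neg_distrib]
      refine Finset.sum_congr rfl fun q _ => ?_
      rw [hW2 i p q j]
      ring
    linarith
  have hHs : ∀ y i j, Hmat N W i j y = Hmat N W j i y := by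
    intro y i j
    unfold Hmat
    rw [Finset.sum_comm]
    refine Finset.sum_congr rfl fun p _ => Finset.sum_congr rfl fun q _ => ?_
    rw [hW3 i q j p]
    ring
  have hQ : ∀ y ξ : EuclideanSpace ℝ (Fin N),
      ∑ i, ∑ j, Hmat N W i j y * ((y i - ξ i) * (y j - ξ j))
        = Qf N (fun i j => Hmat N W i j y) ξ := by
    intro y ξ
    unfold Qf
    have e1 : ∀ i, ∑ j, Hmat N W i j y * ((y i - ξ i) * (y j - ξ j))
        = - ∑ j, Hmat N W i j y * (y i - ξ i) * ξ j := by
      intro i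
      have : ∀ j, Hmat N W i j y * ((y i - ξ i) * (y j - ξ j))
        = (y i - ξ i) * (Hmat N W i j y * y j) - Hmat N W i j y * (y i - ξ i) * ξ j := by
        intro j; ring
      simp only [this, Finset.sum_sub_distrib, ← Finset.mul_sum, hHr]
      simp
    simp only [e1, Finset.sum_neg_distrib]
    rw [Finset.sum_comm]
    conv_rhs => rw [Finset.sum_comm]
    rw [← Finset.sum_neg_distrib]
    refine Finset.sum_congr rfl fun j _ => ?_
    have : ∀ i, Hmat N W i j y * (y i - ξ i) * ξ j
        = ξ j * (Hmat N W j i y * y i) - Hmat N W i j y * (ξ i * ξ j) := by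
      intro i; rw [hHs y j i]; ring
    simp only [this, Finset.sum_sub_distrib, ← Finset.mul_sum, hHr]
    simp
  have hEf : ∀ y ξ, E y ξ = (f (‖y‖ ^ 2) * ((2 * (2 * lam' ^ m * (-m)) * (-m - 1))
      * (lam' ^ 2 + ‖y - ξ‖ ^ 2) ^ (-m - 1 - 1))) ^ 2
      * (Qf N (fun i j => Hmat N W i j y) ξ) ^ 2 := by
    intro y ξ
    have hS : ∑ i, ∑ j, Hbar N W f i j y * pd N i (pd N j (U ξ)) y
        = f (‖y‖ ^ 2) * ((2 * (2 * lam' ^ m * (-m)) * (-m - 1))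
      * (lam' ^ 2 + ‖y - ξ‖ ^ 2) ^ (-m - 1 - 1)) * Qf N (fun i j => Hmat N W i j y) ξ := by
      have e2 : ∀ i j, Hbar N W f i j y * pd N i (pd N j (U ξ)) y
          = f (‖y‖ ^ 2) * ((2 * (2 * lam' ^ m * (-m)) * (-m - 1))
      * (lam' ^ 2 + ‖y - ξ‖ ^ 2) ^ (-m - 1 - 1)) * (Hmat N W i j y * ((y i - ξ i) * (y j - ξ j)))
          + f (‖y‖ ^ 2) * ((2 * lam' ^ m * (-m)) * (lam' ^ 2 + ‖y - ξ‖ ^ 2) ^ (-m - 1))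
            * (Hmat N W i j y * (if i = j then 1 else 0)) := by
        intro i j
        rw [hUf, pd1_aux N lam' hlam', pd2_aux N lam' hlam']
        unfold Hbar
        ring
      simp only [e2, Finset.sum_add_distrib, ← Finset.mul_sum, hQ]
      simp [hHtr]
    rw [hE, ← mul_pow, ← hS, sq]
    simp only [Finset.sum_mul, Finset.mul_sum]
    refine Finset.sum_congr rfl fun i _ => Finset.sum_congr rfl fun j _ =>
      Finset.sum_congr rfl fun s _ => Finset.sum_congr rfl fun t _ => ?_
    ring
  constructor
  · have : ∀ y, E y 0 = 0 := by
      intro y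
      rw [hEf]
      simp [Qf]
    simp [this]
  · intro p q
    have : ∀ y, d2Param N p q (E y) = 0 := by
      intro y
      refine d2_aux N (fun i j => Hmat N W i j y) _ (E y) ?_ (hEf y) p q
      refine ContDiff.pow (contDiff_const.mul (contDiff_const.mul ?_)) 2
      refine ContDiff.rpow_const_of_ne ?_ ?_
      · exact contDiff_const.add ((contDiff_const.sub contDiff_id).norm_sq ℝ)
      · intro ξ
        positivity
    simp [this]
end
end

section
/- Fix λ' > 0 and let u(y) = (λ'/(λ'² + |y|²))^{(N−4)/2} (the bubble centered at ξ' = 0). Then ∫_{ℝ^N} Σ_{i,ℓ,k,m=1}^N ((∂_ℓ H̄_{mk})(y))² ((∂_i u)(y))² dy = |S^{N−1}| · (Σ_{i,j,k,ℓ=1}^N (W_{ikjℓ}+W_{iℓjk})²) · λ'^{N−4} · { [2(N−4)²/(N(N+2))] ∫₀^∞ [ r² f'(r²)² + 2 f(r²) f'(r²) ] r^{N+5}/(λ'²+r²)^{N−2} dr + [(N−4)²/N] ∫₀^∞ f(r²)² r^{N+3}/(λ'²+r²)^{N−2} dr }. -/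
open scoped BigOperators
open MeasureTheory

noncomputable section

lemma mom_isom {N : ℕ} (φ : ℝ → ℝ) (n : ℕ) (v w : EuclideanSpace ℝ (Fin N)) (h : ‖v‖ = ‖w‖) :
    ∫ y : EuclideanSpace ℝ (Fin N), φ ‖y‖ * (inner ℝ v y) ^ n
      = ∫ y : EuclideanSpace ℝ (Fin N), φ ‖y‖ * (inner ℝ w y) ^ n := by
  set R := Submodule.reflection ((Submodule.span ℝ {v - w})ᗮ) with hR
  have hv : R v = w := Submodule.reflection_sub h
  have := (R.measurePreserving).integral_comp' (f := R.toMeasurableEquiv)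
    (g := fun y => φ ‖y‖ * (inner ℝ w y) ^ n)
  rw [← this]
  refine integral_congr_ae (Filter.Eventually.of_forall fun y => ?_)
  simp only [LinearIsometryEquiv.coe_toMeasurableEquiv, LinearIsometryEquiv.norm_map]
  rw [← hv, LinearIsometryEquiv.inner_map_map]

lemma mom_pow {N : ℕ} (hN : 0 < N) (φ : ℝ → ℝ) (n : ℕ) : ∃ K : ℝ, ∀ v : EuclideanSpace ℝ (Fin N),
    ∫ y : EuclideanSpace ℝ (Fin N), φ ‖y‖ * (inner ℝ v y) ^ n = K * ‖v‖ ^ n := by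
  refine ⟨∫ y : EuclideanSpace ℝ (Fin N),
    φ ‖y‖ * (inner ℝ (EuclideanSpace.single (⟨0, hN⟩ : Fin N) (1:ℝ)) y) ^ n, fun v => ?_⟩
  rw [mom_isom φ n v (‖v‖ • EuclideanSpace.single (⟨0, hN⟩ : Fin N) (1:ℝ)) (by simp [norm_smul]),
    ← integral_mul_const]
  congr 1; ext y
  rw [inner_smul_left]; simp only [conj_trivial]; ring

/-- `g` is integrable against the radial weight `φ(|y|)`, with integral `x`. -/
def Mom {N : ℕ} (φ : ℝ → ℝ) (g : EuclideanSpace ℝ (Fin N) → ℝ) (x : ℝ) : Prop :=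
  Integrable (fun y : EuclideanSpace ℝ (Fin N) => φ ‖y‖ * g y) ∧
    ∫ y : EuclideanSpace ℝ (Fin N), φ ‖y‖ * g y = x

lemma Mom.add {N : ℕ} {φ : ℝ → ℝ} {g h : EuclideanSpace ℝ (Fin N) → ℝ} {x z : ℝ}
    (hg : Mom φ g x) (hh : Mom φ h z) : Mom φ (fun y => g y + h y) (x + z) := by
  unfold Mom
  simp only [mul_add]
  exact ⟨hg.1.add hh.1, by rw [integral_add hg.1 hh.1, hg.2, hh.2]⟩

lemma Mom.sub {N : ℕ} {φ : ℝ → ℝ} {g h : EuclideanSpace ℝ (Fin N) → ℝ} {x z : ℝ}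
    (hg : Mom φ g x) (hh : Mom φ h z) : Mom φ (fun y => g y - h y) (x - z) := by
  unfold Mom
  simp only [mul_sub]
  exact ⟨hg.1.sub hh.1, by rw [integral_sub hg.1 hh.1, hg.2, hh.2]⟩

lemma Mom.cmul {N : ℕ} {φ : ℝ → ℝ} {g : EuclideanSpace ℝ (Fin N) → ℝ} {x : ℝ}
    (hg : Mom φ g x) (c : ℝ) : Mom φ (fun y => c * g y) (c * x) := by
  unfold Mom
  simp only [mul_left_comm _ c]
  exact ⟨hg.1.const_mul c, by rw [integral_const_mul, hg.2]⟩

lemma Mom.sum {N : ℕ} {φ : ℝ → ℝ} {ι : Type} (s : Finset ι)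
    {g : ι → EuclideanSpace ℝ (Fin N) → ℝ} {x : ι → ℝ}
    (hg : ∀ i, Mom φ (g i) (x i)) : Mom φ (fun y => ∑ i ∈ s, g i y) (∑ i ∈ s, x i) := by
  unfold Mom
  simp only [Finset.mul_sum]
  refine ⟨integrable_finsetSum _ fun i _ => (hg i).1, ?_⟩
  rw [integral_finsetSum _ fun i _ => (hg i).1]
  exact Finset.sum_congr rfl fun i _ => (hg i).2

lemma Mom.congr {N : ℕ} {φ : ℝ → ℝ} {g h : EuclideanSpace ℝ (Fin N) → ℝ} {x z : ℝ}
    (hg : Mom φ g x) (h1 : ∀ y, g y = h y) (h2 : x = z) : Mom φ h z := by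
  obtain rfl : g = h := funext h1
  exact h2 ▸ hg

lemma mom_pow' {N : ℕ} (hN : 0 < N) (φ : ℝ → ℝ) (hφ : Continuous φ) (n : ℕ)
    (hi : Integrable (fun y : EuclideanSpace ℝ (Fin N) => φ ‖y‖ * ‖y‖ ^ n)) :
    ∃ K : ℝ, ∀ v : EuclideanSpace ℝ (Fin N), Mom φ (fun y => (inner ℝ v y) ^ n) (K * ‖v‖ ^ n) := by
  obtain ⟨K, hK⟩ := mom_pow hN φ n
  refine ⟨K, fun v => ⟨?_, hK v⟩⟩
  refine (hi.norm.const_mul (‖v‖ ^ n)).mono' (by fun_prop) (Filter.Eventually.of_forall fun y => ?_)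
  simp only [norm_mul, norm_pow, norm_norm]
  calc ‖φ ‖y‖‖ * ‖inner ℝ v y‖ ^ n ≤ ‖φ ‖y‖‖ * (‖v‖ * ‖y‖) ^ n := by
        gcongr; exact norm_inner_le_norm v y
    _ = _ := by ring

lemma mom2_inner {N : ℕ} (hN : 0 < N) (φ : ℝ → ℝ) (hφ : Continuous φ)
    (hi : Integrable (fun y : EuclideanSpace ℝ (Fin N) => φ ‖y‖ * ‖y‖ ^ 2)) :
    ∃ K : ℝ, ∀ a b : EuclideanSpace ℝ (Fin N),
      Mom φ (fun y => inner ℝ a y * inner ℝ b y) (K * inner ℝ a b) := by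
  obtain ⟨K, hK⟩ := mom_pow' hN φ hφ 2 hi
  refine ⟨K, fun a b => ?_⟩
  refine (((hK (a + b)).sub (hK (a - b))).cmul (1 / 4)).congr (fun y => ?_) ?_
  · simp only [inner_add_left, inner_sub_left]; ring
  · simp only [← real_inner_self_eq_norm_sq, inner_add_left, inner_sub_left, inner_add_right,
      inner_sub_right, real_inner_comm a b]
    ring

lemma mom4_inner {N : ℕ} (hN : 0 < N) (φ : ℝ → ℝ) (hφ : Continuous φ)
    (hi : Integrable (fun y : EuclideanSpace ℝ (Fin N) => φ ‖y‖ * ‖y‖ ^ 4)) :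
    ∃ K : ℝ, ∀ a b c d : EuclideanSpace ℝ (Fin N),
      Mom φ (fun y => inner ℝ a y * inner ℝ b y * inner ℝ c y * inner ℝ d y)
        (K * (inner ℝ a b * inner ℝ c d + inner ℝ a c * inner ℝ b d
          + inner ℝ a d * inner ℝ b c)) := by
  obtain ⟨K, hK⟩ := mom_pow' hN φ hφ 4 hi
  refine ⟨K / 3, fun a b c d => ?_⟩
  refine (((((hK (a + b + c + d)).sub (hK (a + b + c - d))).sub
    ((hK (a + b - c + d)).sub (hK (a + b - c - d)))).sub
    (((hK (a - b + c + d)).sub (hK (a - b + c - d))).sub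
    ((hK (a - b - c + d)).sub (hK (a - b - c - d))))).cmul (1 / 192)).congr (fun y => ?_) ?_
  · simp only [inner_add_left, inner_sub_left]; ring
  · have h4 : ∀ v : EuclideanSpace ℝ (Fin N), ‖v‖ ^ 4 = (inner ℝ v v) ^ 2 := fun v => by
      rw [real_inner_self_eq_norm_sq]; ring
    simp only [h4, inner_add_left, inner_sub_left, inner_add_right,
      inner_sub_right, real_inner_comm a b, real_inner_comm a c, real_inner_comm a d,
      real_inner_comm b c, real_inner_comm b d, real_inner_comm c d]
    ring

lemma mom2 {N : ℕ} (hN : 0 < N) (φ : ℝ → ℝ) (hφ : Continuous φ)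
    (hi : Integrable (fun y : EuclideanSpace ℝ (Fin N) => φ ‖y‖ * ‖y‖ ^ 2)) (p q : Fin N) :
    Mom φ (fun y => y p * y q)
      ((∫ y : EuclideanSpace ℝ (Fin N), φ ‖y‖ * ‖y‖ ^ 2) / N * (if p = q then 1 else 0)) := by
  obtain ⟨K, hK⟩ := mom2_inner hN φ hφ hi
  have key : ∀ p q : Fin N, Mom φ (fun y => y p * y q) (K * (if p = q then 1 else 0)) := by
    intro p q
    refine (hK (EuclideanSpace.single p 1) (EuclideanSpace.single q 1)).congr (fun y => ?_) ?_
    · simp [EuclideanSpace.inner_single_left]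
    · simp [EuclideanSpace.inner_single_left, Pi.single_apply]
  have h := (Mom.sum Finset.univ fun p => key p p).2
  have h2 : ∀ y : EuclideanSpace ℝ (Fin N), ∑ i, y i * y i = ‖y‖ ^ 2 := fun y => by
    rw [EuclideanSpace.norm_sq_eq]; simp [sq]
  simp only [h2] at h
  have hN' : (N : ℝ) ≠ 0 := by positivity
  rw [h]
  refine (key p q).congr (fun _ => rfl) ?_
  simp
  field_simp

lemma mom4 {N : ℕ} (hN : 0 < N) (φ : ℝ → ℝ) (hφ : Continuous φ)
    (hi : Integrable (fun y : EuclideanSpace ℝ (Fin N) => φ ‖y‖ * ‖y‖ ^ 4)) (p q r s : Fin N) :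
    Mom φ (fun y => y p * y q * y r * y s)
      ((∫ y : EuclideanSpace ℝ (Fin N), φ ‖y‖ * ‖y‖ ^ 4) / (N * (N + 2)) *
        ((if p = q then 1 else 0) * (if r = s then 1 else 0)
          + (if p = r then 1 else 0) * (if q = s then 1 else 0)
          + (if p = s then 1 else 0) * (if q = r then 1 else 0))) := by
  obtain ⟨K, hK⟩ := mom4_inner hN φ hφ hi
  have key : ∀ p q r s : Fin N, Mom φ (fun y => y p * y q * y r * y s) (K *
      ((if p = q then 1 else 0) * (if r = s then 1 else 0)
          + (if p = r then 1 else 0) * (if q = s then 1 else 0)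
          + (if p = s then 1 else 0) * (if q = r then 1 else 0))) := by
    intro p q r s
    refine (hK (EuclideanSpace.single p 1) (EuclideanSpace.single q 1)
      (EuclideanSpace.single r 1) (EuclideanSpace.single s 1)).congr (fun y => ?_) ?_
    · simp [EuclideanSpace.inner_single_left]
    · simp [EuclideanSpace.inner_single_left, Pi.single_apply]
  have h := (Mom.sum Finset.univ fun p => Mom.sum Finset.univ fun q => key p p q q).2
  have h2 : ∀ y : EuclideanSpace ℝ (Fin N), ∑ i, ∑ j, y i * y i * y j * y j = ‖y‖ ^ 4 := fun y => by
    rw [show ‖y‖ ^ 4 = ‖y‖ ^ 2 * ‖y‖ ^ 2 by ring, EuclideanSpace.norm_sq_eq, Finset.sum_mul_sum]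
    simp [sq, mul_assoc]
  simp only [h2] at h
  have hN' : (N : ℝ) ≠ 0 := by positivity
  have hN'' : (N : ℝ) + 2 ≠ 0 := by positivity
  rw [h]
  refine (key p q r s).congr (fun _ => rfl) ?_
  congr 1
  simp [mul_add, Finset.sum_add_distrib]
  field_simp
  ring

/-- second moment of a linear form -/
lemma mom_lin {N : ℕ} (hN : 0 < N) (φ : ℝ → ℝ) (hφ : Continuous φ)
    (hi : Integrable (fun y : EuclideanSpace ℝ (Fin N) => φ ‖y‖ * ‖y‖ ^ 2)) (a : Fin N → ℝ) :
    Mom φ (fun y => (∑ p, a p * y p) ^ 2)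
      ((∫ y : EuclideanSpace ℝ (Fin N), φ ‖y‖ * ‖y‖ ^ 2) / N * ∑ p, a p ^ 2) := by
  refine (Mom.sum Finset.univ fun p => Mom.sum Finset.univ fun q =>
    (mom2 hN φ hφ hi p q).cmul (a p * a q)).congr (fun y => ?_) ?_
  · rw [sq, Finset.sum_mul_sum]
    refine Finset.sum_congr rfl fun p _ => Finset.sum_congr rfl fun q _ => by ring
  · simp [Finset.mul_sum]
    refine Finset.sum_congr rfl fun p _ => by ring

/-- second moment of a trace-free quadratic form -/
lemma mom_quad {N : ℕ} (hN : 0 < N) (φ : ℝ → ℝ) (hφ : Continuous φ)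
    (hi : Integrable (fun y : EuclideanSpace ℝ (Fin N) => φ ‖y‖ * ‖y‖ ^ 4))
    (a : Fin N → Fin N → ℝ) (ha : ∑ p, a p p = 0) :
    Mom φ (fun y => (∑ p, ∑ q, a p q * y p * y q) ^ 2)
      ((∫ y : EuclideanSpace ℝ (Fin N), φ ‖y‖ * ‖y‖ ^ 4) / (N * (N + 2)) *
        (1 / 2 * ∑ p, ∑ q, (a p q + a q p) ^ 2)) := by
  set I := (∫ y : EuclideanSpace ℝ (Fin N), φ ‖y‖ * ‖y‖ ^ 4) / (N * (N + 2)) with hI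
  refine (Mom.sum Finset.univ fun p => Mom.sum Finset.univ fun q => Mom.sum Finset.univ fun r =>
    Mom.sum Finset.univ fun s =>
    (mom4 hN φ hφ hi p q r s).cmul (a p q * a r s)).congr (fun y => ?_) ?_
  · rw [sq, Finset.sum_mul]
    refine Finset.sum_congr rfl fun p _ => ?_
    rw [Finset.sum_mul]
    refine Finset.sum_congr rfl fun q _ => ?_
    simp only [Finset.mul_sum]
    refine Finset.sum_congr rfl fun r _ => Finset.sum_congr rfl fun s _ => by ring
  · rw [← hI]
    have e1 : ∑ p, ∑ q, (a p q + a q p) ^ 2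
        = 2 * ((∑ p, ∑ q, a p q * a p q) + ∑ p, ∑ q, a p q * a q p) := by
      have : ∑ p, ∑ q, a q p * a q p = ∑ p, ∑ q, a p q * a p q := Finset.sum_comm
      rw [two_mul]
      nth_rewrite 1 [← this]
      simp only [← Finset.sum_add_distrib]
      refine Finset.sum_congr rfl fun p _ => Finset.sum_congr rfl fun q _ => by ring
    have e2 : ∑ p, ∑ r, a p p * a r r = 0 := by
      rw [← Finset.sum_mul_sum, ha, zero_mul]
    rw [e1]
    have e3 : ∀ p q r s : Fin N, a p q * a r s * (I * ((if p = q then 1 else 0) * (if r = s then 1 else 0)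
          + (if p = r then 1 else 0) * (if q = s then 1 else 0)
          + (if p = s then 1 else 0) * (if q = r then 1 else 0)))
        = I * ((if p = q then (if r = s then a p q * a r s else 0) else 0)
          + (if p = r then (if q = s then a p q * a r s else 0) else 0)
          + (if p = s then (if q = r then a p q * a r s else 0) else 0)) := by
      intro p q r s
      split_ifs <;> ring
    simp only [e3, ← Finset.mul_sum, Finset.sum_add_distrib]
    have f1 : ∑ p, ∑ q, ∑ r, ∑ s, (if p = q then (if r = s then a p q * a r s else 0) else 0)
        = ∑ p, ∑ r, a p p * a r r := by
      refine Finset.sum_congr rfl fun p _ => ?_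
      rw [Finset.sum_eq_single p (by intro b _ hb; simp [hb.symm]) (by simp)]
      simp
    have f2 : ∑ p, ∑ q, ∑ r, ∑ s, (if p = r then (if q = s then a p q * a r s else 0) else 0)
        = ∑ p, ∑ q, a p q * a p q := by
      refine Finset.sum_congr rfl fun p _ => Finset.sum_congr rfl fun q _ => ?_
      rw [Finset.sum_eq_single p (by intro b _ hb; simp [hb.symm]) (by simp)]
      simp
    have f3 : ∑ p, ∑ q, ∑ r, ∑ s, (if p = s then (if q = r then a p q * a r s else 0) else 0)
        = ∑ p, ∑ q, a p q * a q p := by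
      refine Finset.sum_congr rfl fun p _ => Finset.sum_congr rfl fun q _ => ?_
      rw [Finset.sum_eq_single q (by intro b _ hb; simp [hb.symm]) (by simp)]
      simp
    rw [f1, f2, f3, e2]
    ring

lemma intOn_mono (lam : ℝ) (hl : 0 < lam) (M k : ℕ) (hk : k + 2 ≤ 2 * M) :
    IntegrableOn (fun r : ℝ => r ^ k / (lam ^ 2 + r ^ 2) ^ M) (Set.Ioi 0) := by
  have hpos : ∀ r : ℝ, 0 < lam ^ 2 + r ^ 2 := fun r => by positivity
  have hc : Continuous (fun r : ℝ => r ^ k / (lam ^ 2 + r ^ 2) ^ M) := by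
    refine Continuous.div (by fun_prop) (by fun_prop) fun r => (pow_pos (hpos r) M).ne'
  refine IntegrableOn.mono_set ?_ Set.Ioi_subset_Ici_self
  refine LocallyIntegrableOn.integrableOn_of_isBigO_atTop (g := fun t : ℝ => t ^ (-2 : ℝ))
    (hc.locallyIntegrable.locallyIntegrableOn _) ?_
    ⟨Set.Ioi 1, Filter.Ioi_mem_atTop 1, integrableOn_Ioi_rpow_of_lt (by norm_num) one_pos⟩
  refine Asymptotics.IsBigO.of_bound 1 ?_
  filter_upwards [Filter.eventually_ge_atTop (1 : ℝ)] with r hr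
  have hr0 : 0 < r := by linarith
  have e : r ^ (-2 : ℝ) = 1 / r ^ 2 := by
    rw [Real.rpow_neg hr0.le]; norm_num
  rw [e, Real.norm_of_nonneg (by have := hpos r; positivity), Real.norm_of_nonneg (by positivity),
    one_mul, div_le_div_iff₀ (pow_pos (hpos r) M) (by positivity), one_mul, ← pow_add]
  calc r ^ (k + 2) ≤ r ^ (2 * M) := pow_le_pow_right₀ hr hk
    _ = (r ^ 2) ^ M := pow_mul r 2 M
    _ ≤ _ := by gcongr; nlinarith [sq_nonneg lam]

lemma intOn_poly (lam : ℝ) (hl : 0 < lam) (M d c : ℕ) (Q : Polynomial ℝ) (hQ : Q.natDegree ≤ d)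
    (hk : 2 * d + c + 2 ≤ 2 * M) :
    IntegrableOn (fun r : ℝ => Q.eval (r ^ 2) * r ^ c / (lam ^ 2 + r ^ 2) ^ M) (Set.Ioi 0) := by
  have : (fun r : ℝ => Q.eval (r ^ 2) * r ^ c / (lam ^ 2 + r ^ 2) ^ M)
      = fun r => ∑ i ∈ Finset.range (d + 1),
        Q.coeff i * (r ^ (2 * i + c) / (lam ^ 2 + r ^ 2) ^ M) := by
    ext r
    rw [Polynomial.eval_eq_sum_range' (Nat.lt_succ_of_le hQ), Finset.sum_mul, Finset.sum_div]
    refine Finset.sum_congr rfl fun i _ => ?_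
    rw [pow_add, pow_mul]; ring
  rw [this]
  refine integrable_finsetSum _ fun i hi => ?_
  have := Finset.mem_range.1 hi
  exact (intOn_mono lam hl M (2 * i + c) (by omega)).const_mul _

lemma radial {N : ℕ} (hN : 25 ≤ N) (lam : ℝ) (hl : 0 < lam) (d n : ℕ) (Q : Polynomial ℝ)
    (hQ : Q.natDegree ≤ d) (hk : 2 * d + (N + 1 + n) + 2 ≤ 2 * (N - 2)) (c : ℝ) :
    Integrable (fun y : EuclideanSpace ℝ (Fin N) =>
      (c * (Q.eval (‖y‖ ^ 2) * ‖y‖ ^ 2 / (lam ^ 2 + ‖y‖ ^ 2) ^ (N - 2))) * ‖y‖ ^ n) ∧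
    ∫ y : EuclideanSpace ℝ (Fin N),
      (c * (Q.eval (‖y‖ ^ 2) * ‖y‖ ^ 2 / (lam ^ 2 + ‖y‖ ^ 2) ^ (N - 2))) * ‖y‖ ^ n
      = sphereArea N * (c * ∫ r in Set.Ioi (0 : ℝ),
          Q.eval (r ^ 2) * r ^ (N + 1 + n) / (lam ^ 2 + r ^ 2) ^ (N - 2)) := by
  have hI := intOn_poly lam hl (N - 2) d (N + 1 + n) Q hQ hk
  have : NeZero N := ⟨by omega⟩
  have : Nontrivial (EuclideanSpace ℝ (Fin N)) := by
    apply Module.nontrivial_of_finrank_pos (R := ℝ); simp; omega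
  have e : ∀ r : ℝ, r ^ (N - 1) •
      ((c * (Q.eval (r ^ 2) * r ^ 2 / (lam ^ 2 + r ^ 2) ^ (N - 2))) * r ^ n)
      = c * (Q.eval (r ^ 2) * r ^ (N + 1 + n) / (lam ^ 2 + r ^ 2) ^ (N - 2)) := by
    intro r
    rw [show N + 1 + n = (N - 1) + 2 + n by omega, pow_add, pow_add, smul_eq_mul]
    ring
  constructor
  · rw [integrable_fun_norm_addHaar volume
      (f := fun r => (c * (Q.eval (r ^ 2) * r ^ 2 / (lam ^ 2 + r ^ 2) ^ (N - 2))) * r ^ n)]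
    simp only [finrank_euclideanSpace, Fintype.card_fin, e]
    exact hI.const_mul c
  · rw [integral_fun_norm_addHaar volume
      (f := fun r => (c * (Q.eval (r ^ 2) * r ^ 2 / (lam ^ 2 + r ^ 2) ^ (N - 2))) * r ^ n)]
    have hs : sphereArea N = (volume : Measure (EuclideanSpace ℝ (Fin N))).toSphere.real Set.univ :=
      rfl
    rw [hs, Measure.toSphere_real_apply_univ]
    simp only [finrank_euclideanSpace, Fintype.card_fin, e, integral_const_mul]
    simp only [nsmul_eq_mul, smul_eq_mul]
    ring

lemma hasFDeriv_radial {N : ℕ} (g : ℝ → ℝ) (g' : ℝ) (y : EuclideanSpace ℝ (Fin N))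
    (hg : HasDerivAt g g' (‖y‖ ^ 2)) :
    HasFDerivAt (fun y : EuclideanSpace ℝ (Fin N) => g (‖y‖ ^ 2))
      (g' • (2 • (innerSL ℝ) y)) y := by
  have h := (hasFDerivAt_id (𝕜 := ℝ) y).norm_sq
  exact hg.comp_hasFDerivAt y h

lemma pd_radial {N : ℕ} (g : ℝ → ℝ) (g' : ℝ) (y : EuclideanSpace ℝ (Fin N))
    (hg : HasDerivAt g g' (‖y‖ ^ 2)) (i : Fin N) :
    pd N i (fun y => g (‖y‖ ^ 2)) y = 2 * g' * y i := by
  unfold pd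
  rw [(hasFDeriv_radial g g' y hg).fderiv]
  simp [EuclideanSpace.inner_single_right]
  ring

lemma hasFDeriv_Hmat {N : ℕ} (W : Fin N → Fin N → Fin N → Fin N → ℝ) (i j : Fin N)
    (y : EuclideanSpace ℝ (Fin N)) :
    HasFDerivAt (Hmat N W i j) (∑ p, ∑ q, ((W i p j q * y p) • (EuclideanSpace.proj q : EuclideanSpace ℝ (Fin N) →L[ℝ] ℝ)
      + y q • (W i p j q • (EuclideanSpace.proj p : EuclideanSpace ℝ (Fin N) →L[ℝ] ℝ)))) y := by
  have hp : ∀ p : Fin N, HasFDerivAt (fun y : EuclideanSpace ℝ (Fin N) => y p)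
      (EuclideanSpace.proj p : EuclideanSpace ℝ (Fin N) →L[ℝ] ℝ) y := fun p =>
    (EuclideanSpace.proj p : EuclideanSpace ℝ (Fin N) →L[ℝ] ℝ).hasFDerivAt
  unfold Hmat
  refine HasFDerivAt.fun_sum fun p _ => HasFDerivAt.fun_sum fun q _ => ?_
  exact ((hp p).const_mul (W i p j q)).mul (hp q)

lemma pd_Hbar {N : ℕ} (W : Fin N → Fin N → Fin N → Fin N → ℝ) (f : ℝ → ℝ) (f' : ℝ) (i j l : Fin N)
    (y : EuclideanSpace ℝ (Fin N)) (hg : HasDerivAt f f' (‖y‖ ^ 2)) :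
    pd N l (Hbar N W f i j) y = 2 * f' * y l * Hmat N W i j y
      + f (‖y‖ ^ 2) * ∑ q, (W i l j q + W i q j l) * y q := by
  have h := (hasFDeriv_radial f f' y hg).mul (hasFDeriv_Hmat W i j y)
  unfold pd
  have e : Hbar N W f i j = (fun y => f (‖y‖ ^ 2)) * Hmat N W i j := rfl
  rw [e, h.fderiv]
  have e2 : ∑ p, ∑ q, ((W i p j q * y p) * (EuclideanSpace.single l (1:ℝ) : EuclideanSpace ℝ (Fin N)) q
      + y q * (W i p j q * (EuclideanSpace.single l (1:ℝ) : EuclideanSpace ℝ (Fin N)) p))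
      = ∑ q, (W i l j q + W i q j l) * y q := by
    simp only [Finset.sum_add_distrib, add_mul]
    rw [add_comm]
    congr 1
    · rw [Finset.sum_eq_single l (by intro b _ hb; simp [hb]) (by simp)]
      simp [mul_comm]
    · refine Finset.sum_congr rfl fun p _ => ?_
      rw [Finset.sum_eq_single l (by intro b _ hb; simp [hb]) (by simp)]
      simp
  rw [← e2]
  simp [EuclideanSpace.inner_single_right]
  ring

lemma sum_pd_Hbar {N : ℕ} (W : Fin N → Fin N → Fin N → Fin N → ℝ) (f : ℝ → ℝ) (f' : ℝ) (i j : Fin N)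
    (y : EuclideanSpace ℝ (Fin N)) (hg : HasDerivAt f f' (‖y‖ ^ 2)) :
    ∑ l, (pd N l (Hbar N W f i j) y) ^ 2
      = 4 * (‖y‖ ^ 2 * f' ^ 2 + 2 * f (‖y‖ ^ 2) * f') * (∑ p, ∑ q, W i p j q * y p * y q) ^ 2
        + f (‖y‖ ^ 2) ^ 2 * ∑ l, (∑ q, (W i l j q + W i q j l) * y q) ^ 2 := by
  have eul : ∑ l, y l * ∑ q, (W i l j q + W i q j l) * y q
      = 2 * ∑ p, ∑ q, W i p j q * y p * y q := by
    have : ∑ l, ∑ q, W i q j l * y q * y l = ∑ p, ∑ q, W i p j q * y p * y q := Finset.sum_comm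
    rw [two_mul]
    nth_rewrite 2 [← this]
    simp only [← Finset.sum_add_distrib, Finset.mul_sum]
    refine Finset.sum_congr rfl fun p _ => Finset.sum_congr rfl fun q _ => by ring
  have hn : ‖y‖ ^ 2 = ∑ l, y l ^ 2 := by rw [EuclideanSpace.norm_sq_eq]; simp
  simp only [pd_Hbar W f f' i j _ y hg]
  unfold Hmat
  set H := ∑ p, ∑ q, W i p j q * y p * y q
  have e : ∀ l, (2 * f' * y l * H + f (‖y‖ ^ 2) * ∑ q, (W i l j q + W i q j l) * y q) ^ 2
      = 4 * f' ^ 2 * H ^ 2 * y l ^ 2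
        + 4 * f' * H * f (‖y‖ ^ 2) * (y l * ∑ q, (W i l j q + W i q j l) * y q)
        + f (‖y‖ ^ 2) ^ 2 * (∑ q, (W i l j q + W i q j l) * y q) ^ 2 := fun l => by ring
  simp only [e, Finset.sum_add_distrib, ← Finset.mul_sum, eul]
  rw [← hn]
  ring

lemma sum_pd_u {N : ℕ} (hN : 25 ≤ N) (lam' : ℝ) (hlam' : 0 < lam')
    (u : EuclideanSpace ℝ (Fin N) → ℝ)
    (hu : ∀ y, u y = (lam' / (lam' ^ 2 + ‖y‖ ^ 2)) ^ (((N : ℝ) - 4) / 2))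
    (y : EuclideanSpace ℝ (Fin N)) :
    ∑ i, (pd N i u y) ^ 2
      = ((N : ℝ) - 4) ^ 2 * lam' ^ (N - 4) * (‖y‖ ^ 2 / (lam' ^ 2 + ‖y‖ ^ 2) ^ (N - 2)) := by
  have hn : ‖y‖ ^ 2 = ∑ l, y l ^ 2 := by rw [EuclideanSpace.norm_sq_eq]; simp
  have hs : 0 < lam' ^ 2 + ‖y‖ ^ 2 := by positivity
  have hd : HasDerivAt (fun t : ℝ => lam' / (lam' ^ 2 + t))
      (-(lam' / (lam' ^ 2 + ‖y‖ ^ 2) ^ 2)) (‖y‖ ^ 2) := by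
    have := (hasDerivAt_const (‖y‖ ^ 2) lam').div ((hasDerivAt_id (‖y‖ ^ 2)).const_add (lam' ^ 2)) hs.ne'
    refine this.congr_deriv ?_
    simp [neg_div]
  have hd2 := hd.rpow_const (p := ((N : ℝ) - 4) / 2) (Or.inl (by positivity))
  have hu' : u = fun y => (fun t : ℝ => (lam' / (lam' ^ 2 + t)) ^ (((N : ℝ) - 4) / 2)) (‖y‖ ^ 2) :=
    funext hu
  rw [hu']
  simp only [pd_radial _ _ y hd2]
  simp only [mul_pow, ← Finset.mul_sum, ← hn]
  have hb : 0 < lam' / (lam' ^ 2 + ‖y‖ ^ 2) := by positivity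
  have e : ((lam' / (lam' ^ 2 + ‖y‖ ^ 2)) ^ (((N : ℝ) - 4) / 2 - 1)) ^ 2
      = (lam' / (lam' ^ 2 + ‖y‖ ^ 2)) ^ (N - 6) := by
    rw [← Real.rpow_natCast _ 2, ← Real.rpow_mul hb.le, ← Real.rpow_natCast _ (N - 6)]
    congr 1
    rw [Nat.cast_sub (by omega)]
    push_cast; ring
  rw [e]
  obtain ⟨k, rfl⟩ : ∃ k, N = k + 6 := ⟨N - 6, by omega⟩
  rw [show k + 6 - 6 = k by omega, show k + 6 - 4 = k + 2 by omega,
    show k + 6 - 2 = k + 4 by omega]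
  rw [div_pow lam' (lam' ^ 2 + ‖y‖ ^ 2) k]
  generalize lam' ^ 2 + ‖y‖ ^ 2 = S at hs
  push_cast
  field_simp
  ring

theorem stmt_16 (N : ℕ) (hN : 25 ≤ N)
    (W : Fin N → Fin N → Fin N → Fin N → ℝ)
    (hW1 : ∀ i p j q, W i p j q = - W p i j q)
    (hW2 : ∀ i p j q, W i p j q = - W i p q j)
    (hW3 : ∀ i p j q, W i p j q = W j q i p)
    (hBianchi : ∀ i p j q, W i p j q + W i j q p + W i q p j = 0)
    (hTrace : ∀ p q, ∑ i : Fin N, W i p i q = 0)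
    (f : ℝ → ℝ)
    (hf : ∃ P : Polynomial ℝ, P.degree ≤ 4 ∧ ∀ x, f x = P.eval x)
    (lam' : ℝ) (hlam' : 0 < lam')
    (u : EuclideanSpace ℝ (Fin N) → ℝ)
    (hu : ∀ y, u y = (lam' / (lam' ^ 2 + ‖y‖ ^ 2)) ^ (((N : ℝ) - 4) / 2)) :
    (∫ y : EuclideanSpace ℝ (Fin N),
        ∑ i : Fin N, ∑ l : Fin N, ∑ k : Fin N, ∑ m : Fin N,
          (pd N l (Hbar N W f m k) y) ^ 2 * (pd N i u y) ^ 2)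
      = sphereArea N
          * (∑ i : Fin N, ∑ j : Fin N, ∑ k : Fin N, ∑ l : Fin N,
              (W i k j l + W i l j k) ^ 2)
          * lam' ^ (N - 4)
          * ((2 * ((N : ℝ) - 4) ^ 2 / (N * ((N : ℝ) + 2)))
              * (∫ r in Set.Ioi (0 : ℝ),
                  (r ^ 2 * deriv f (r ^ 2) ^ 2 + 2 * f (r ^ 2) * deriv f (r ^ 2))
                    * r ^ (N + 5) / (lam' ^ 2 + r ^ 2) ^ (N - 2))
            + (((N : ℝ) - 4) ^ 2 / N)
              * (∫ r in Set.Ioi (0 : ℝ),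
                  f (r ^ 2) ^ 2 * r ^ (N + 3) / (lam' ^ 2 + r ^ 2) ^ (N - 2))) := by

  obtain ⟨P, hPd, hP⟩ := hf
  obtain rfl : f = fun x => P.eval x := funext hP
  have hP4 : P.natDegree ≤ 4 := Polynomial.natDegree_le_of_degree_le hPd
  have hder : ∀ x, HasDerivAt (fun x => P.eval x) (P.derivative.eval x) x := P.hasDerivAt
  have hP3 : P.derivative.natDegree ≤ 3 := (Polynomial.natDegree_derivative_le P).trans (by omega)
  set Q1 : Polynomial ℝ := Polynomial.X * P.derivative ^ 2 + 2 * P * P.derivative with hQ1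
  set Q2 : Polynomial ℝ := P ^ 2 with hQ2
  have d1 : Q1.natDegree ≤ 7 := by
    rw [hQ1]; compute_degree
    omega
  have d2 : Q2.natDegree ≤ 8 := by
    rw [hQ2]; compute_degree
    omega
  set C : ℝ := ((N : ℝ) - 4) ^ 2 * lam' ^ (N - 4) with hC
  set φ1 : ℝ → ℝ := fun r => (4 * C) * (Q1.eval (r ^ 2) * r ^ 2 / (lam' ^ 2 + r ^ 2) ^ (N - 2)) with hφ1
  set φ2 : ℝ → ℝ := fun r => C * (Q2.eval (r ^ 2) * r ^ 2 / (lam' ^ 2 + r ^ 2) ^ (N - 2)) with hφ2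
  have hpos : ∀ r : ℝ, (lam' ^ 2 + r ^ 2) ^ (N - 2) ≠ 0 := fun r => by positivity
  have c1 : Continuous φ1 := by
    refine continuous_const.mul (Continuous.div ?_ (by fun_prop) hpos)
    exact (Q1.continuous.comp (continuous_pow 2)).mul (continuous_pow 2)
  have c2 : Continuous φ2 := by
    refine continuous_const.mul (Continuous.div ?_ (by fun_prop) hpos)
    exact (Q2.continuous.comp (continuous_pow 2)).mul (continuous_pow 2)
  obtain ⟨i1, v1⟩ := radial hN lam' hlam' 7 4 Q1 d1 (by omega) (4 * C)
  obtain ⟨i2, v2⟩ := radial hN lam' hlam' 8 2 Q2 d2 (by omega) C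
  have hN0 : 0 < N := by omega
  have M1 := Mom.sum Finset.univ fun m => Mom.sum Finset.univ fun k =>
    mom_quad hN0 φ1 c1 i1 (fun p q => W m p k q) (by
      rw [← hTrace m k]
      refine Finset.sum_congr rfl fun p _ => ?_
      rw [hW1 m p k p, hW2 p m k p, neg_neg])
  have M2 := Mom.sum Finset.univ fun m => Mom.sum Finset.univ fun k => Mom.sum Finset.univ fun l =>
    mom_lin hN0 φ2 c2 i2 (fun q => W m l k q + W m q k l)
  have hpt : ∀ y : EuclideanSpace ℝ (Fin N),
      ∑ i : Fin N, ∑ l : Fin N, ∑ k : Fin N, ∑ m : Fin N,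
          (pd N l (Hbar N W (fun x => P.eval x) m k) y) ^ 2 * (pd N i u y) ^ 2
      = φ1 ‖y‖ * (∑ m, ∑ k, (∑ p, ∑ q, W m p k q * y p * y q) ^ 2)
        + φ2 ‖y‖ * (∑ m, ∑ k, ∑ l, (∑ q, (W m l k q + W m q k l) * y q) ^ 2) := by
    intro y
    have a1 : ∑ i : Fin N, ∑ l : Fin N, ∑ k : Fin N, ∑ m : Fin N,
          (pd N l (Hbar N W (fun x => P.eval x) m k) y) ^ 2 * (pd N i u y) ^ 2
        = (∑ m, ∑ k, ∑ l, (pd N l (Hbar N W (fun x => P.eval x) m k) y) ^ 2)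
          * ∑ i, (pd N i u y) ^ 2 := by
      simp only [← Finset.sum_mul, ← Finset.mul_sum]
      congr 1
      have sc : ∀ F : Fin N → Fin N → Fin N → ℝ,
          ∑ l, ∑ k, ∑ m, F l k m = ∑ m, ∑ k, ∑ l, F l k m := fun F => by
        calc ∑ l, ∑ k, ∑ m, F l k m = ∑ l, ∑ m, ∑ k, F l k m :=
              Finset.sum_congr rfl fun l _ => Finset.sum_comm
          _ = ∑ m, ∑ l, ∑ k, F l k m := Finset.sum_comm
          _ = _ := Finset.sum_congr rfl fun m _ => Finset.sum_comm
      exact sc _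
    rw [a1, sum_pd_u hN lam' hlam' u hu y]
    simp only [sum_pd_Hbar W _ _ _ _ y (hder (‖y‖ ^ 2)), Finset.sum_add_distrib, ← Finset.mul_sum]
    simp only [hφ1, hφ2, hQ1, hQ2, Polynomial.eval_add, Polynomial.eval_mul, Polynomial.eval_pow,
      Polynomial.eval_X, Polynomial.eval_ofNat]
    ring
  rw [integral_congr_ae (Filter.Eventually.of_forall hpt), integral_add M1.1 M2.1, M1.2, M2.2]
  simp only [← Finset.mul_sum]
  rw [v1, v2]
  have g1 : ∀ r : ℝ, (r ^ 2 * deriv (fun x => P.eval x) (r ^ 2) ^ 2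
      + 2 * P.eval (r ^ 2) * deriv (fun x => P.eval x) (r ^ 2)) = Q1.eval (r ^ 2) := by
    intro r
    rw [(hder (r ^ 2)).deriv]
    simp [hQ1]
  have g2 : ∀ r : ℝ, P.eval (r ^ 2) ^ 2 = Q2.eval (r ^ 2) := by intro r; simp [hQ2]
  simp only [g1, g2]
  rw [show N + 1 + 4 = N + 5 by omega, show N + 1 + 2 = N + 3 by omega]
  have hNr : (N : ℝ) ≠ 0 := by positivity
  rw [hC]
  field_simp
  ring
end
end

section
/- Fix λ' > 0 and for ξ' ∈ ℝ^N let u(y; ξ') = (λ'/(λ'² + |y−ξ'|²))^{(N−4)/2}. Consider the pointwise expression E(y, ξ') = Σ_{i,j,m,s=1}^N H̄_{si}(y) (∂_m∂_m H̄_{js})(y) (∂_i u)(y; ξ') (∂_j u)(y; ξ') (derivatives in y). Then: (i) ∫_{ℝ^N} E(y, 0) dy = 0; and (ii) for all p, q ∈ {1,…,N}, ∫_{ℝ^N} [∂²E/∂ξ'_p∂ξ'_q](y, ξ')|_{ξ'=0} dy = |S^{N−1}| · (Σ_{i,j,k=1}^N (W_{ikjp}+W_{ipjk})(W_{ikjq}+W_{iqjk}))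 · λ'^{N−4} · [2(N−4)²/(N(N+2))] · ∫₀^∞ [ (N+4) f(r²) f'(r²) + 2 r² f(r²) f''(r²) ] r^{N+3}/(λ'²+r²)^{N−2} dr. -/
open scoped BigOperators
open MeasureTheory

noncomputable section

lemma aux_polar (N : ℕ) (hN : 1 ≤ N) (φ : ℝ → ℝ) (Y : EuclideanSpace ℝ (Fin N) → ℝ) (k : ℕ)
    (hY : ∀ (r : ℝ) y, 0 < r → Y (r • y) = r ^ k * Y y) :
    ∫ y, φ ‖y‖ * Y y = (∫ ω, Y (ω : EuclideanSpace ℝ (Fin N)) ∂(sphereMeasure N))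
      * ∫ r in Set.Ioi (0 : ℝ), r ^ (N - 1) * (φ r * r ^ k) := by
  have h1 : ∫ y, φ ‖y‖ * Y y = ∫ x : ({(0)}ᶜ : Set (EuclideanSpace ℝ (Fin N))),
      φ ‖x.1‖ * Y x.1 ∂((volume : Measure (EuclideanSpace ℝ (Fin N))).comap (↑)) := by
    have : Nonempty (Fin N) := ⟨⟨0, hN⟩⟩
    rw [integral_subtype_comap (measurableSet_singleton _).compl fun x ↦ φ (‖x‖) * Y x,
      restrict_compl_singleton]
  rw [h1]
  have h2 := (volume : Measure (EuclideanSpace ℝ (Fin N))).measurePreserving_homeomorphUnitSphereProd.integral_comp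
        (Homeomorph.measurableEmbedding _) (fun z => Y z.1.1 * (φ z.2.1 * z.2.1 ^ k))
  rw [integral_prod_mul (fun z : Metric.sphere (0 : EuclideanSpace ℝ (Fin N)) 1 => Y z.1)
    (fun r : Set.Ioi (0 : ℝ) => φ r.1 * r.1 ^ k)] at h2
  have h3 : ∀ x : ({(0)}ᶜ : Set (EuclideanSpace ℝ (Fin N))), φ ‖x.1‖ * Y x.1 =
      Y (homeomorphUnitSphereProd _ x).1.1 * (φ (homeomorphUnitSphereProd _ x).2.1 *
        (homeomorphUnitSphereProd _ x).2.1 ^ k) := by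
    intro x
    have hx : 0 < ‖x.1‖ := norm_pos_iff.2 x.2
    have h4 := hY ‖x.1‖ (‖x.1‖⁻¹ • x.1) hx
    rw [smul_smul, mul_inv_cancel₀ hx.ne', one_smul] at h4
    simp only [homeomorphUnitSphereProd_apply_fst_coe, homeomorphUnitSphereProd_apply_snd_coe]
    rw [h4]; ring
  simp_rw [h3]
  rw [h2]
  congr 1
  simp only [Measure.volumeIoiPow, ENNReal.ofReal]
  rw [integral_withDensity_eq_integral_smul]
  · rw [integral_subtype_comap measurableSet_Ioi
      fun a ↦ Real.toNNReal (a ^ (Module.finrank ℝ (EuclideanSpace ℝ (Fin N)) - 1)) • (φ a * a ^ k)]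
    refine setIntegral_congr_fun measurableSet_Ioi fun x hx ↦ ?_
    simp only [NNReal.smul_def, Real.coe_toNNReal _ (pow_nonneg (le_of_lt (Set.mem_Ioi.1 hx)) _), finrank_euclideanSpace,
      Fintype.card_fin, smul_eq_mul]
  · exact (measurable_subtype_coe.pow_const _).real_toNNReal

/-! Rules for partial derivatives -/

lemma aux_pd_mul {N : ℕ} (i : Fin N) {f g : EuclideanSpace ℝ (Fin N) → ℝ}
    (hf : Differentiable ℝ f) (hg : Differentiable ℝ g) (y) :
    pd N i (fun y => f y * g y) y = pd N i f y * g y + f y * pd N i g y := by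
  unfold pd
  rw [fderiv_fun_mul (hf y) (hg y)]
  simp
  ring

lemma aux_pd_add {N : ℕ} (i : Fin N) {f g : EuclideanSpace ℝ (Fin N) → ℝ}
    (hf : Differentiable ℝ f) (hg : Differentiable ℝ g) (y) :
    pd N i (fun y => f y + g y) y = pd N i f y + pd N i g y := by
  unfold pd
  rw [fderiv_fun_add (hf y) (hg y)]
  simp

lemma aux_pd_coord {N : ℕ} (i p : Fin N) (y) :
    pd N i (fun y : EuclideanSpace ℝ (Fin N) => y p) y = if i = p then 1 else 0 := by
  unfold pd
  have : HasFDerivAt (fun y : EuclideanSpace ℝ (Fin N) => y p)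
    (EuclideanSpace.proj p : EuclideanSpace ℝ (Fin N) →L[ℝ] ℝ) y :=
    (EuclideanSpace.proj p : EuclideanSpace ℝ (Fin N) →L[ℝ] ℝ).hasFDerivAt
  rw [this.fderiv]
  simp [eq_comm]

lemma aux_pd_radial {N : ℕ} (i : Fin N) (F : ℝ → ℝ) (ξ y : EuclideanSpace ℝ (Fin N))
    (hF : DifferentiableAt ℝ F (‖y - ξ‖ ^ 2)) :
    pd N i (fun y : EuclideanSpace ℝ (Fin N) => F (‖y - ξ‖ ^ 2)) y
      = 2 * (y i - ξ i) * deriv F (‖y - ξ‖ ^ 2) := by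
  unfold pd
  have h1 : HasFDerivAt (fun y : EuclideanSpace ℝ (Fin N) => ‖y - ξ‖ ^ 2)
    _ y := ((hasFDerivAt_id y).sub_const ξ).norm_sq
  have h2 := hF.hasDerivAt.comp_hasFDerivAt (f := fun y : EuclideanSpace ℝ (Fin N) => ‖y - ξ‖ ^ 2) y h1
  have h3 : fderiv ℝ (fun y : EuclideanSpace ℝ (Fin N) => F (‖y - ξ‖ ^ 2)) y = _ := h2.fderiv
  rw [h3]
  simp [EuclideanSpace.inner_single_right]
  ring

lemma aux_pd_radial0 {N : ℕ} (i : Fin N) (F : ℝ → ℝ) (y : EuclideanSpace ℝ (Fin N))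
    (hF : DifferentiableAt ℝ F (‖y‖ ^ 2)) :
    pd N i (fun y : EuclideanSpace ℝ (Fin N) => F (‖y‖ ^ 2)) y
      = 2 * y i * deriv F (‖y‖ ^ 2) := by
  have := aux_pd_radial i F 0 y (by simpa using hF)
  simpa using this

lemma aux_coord_diff {N : ℕ} (p : Fin N) :
    Differentiable ℝ (fun y : EuclideanSpace ℝ (Fin N) => y p) :=
  (EuclideanSpace.proj p : EuclideanSpace ℝ (Fin N) →L[ℝ] ℝ).differentiable

lemma aux_coord_cont {N : ℕ} (p : Fin N) :
    Continuous (fun y : EuclideanSpace ℝ (Fin N) => y p) :=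
  (aux_coord_diff p).continuous

/-! Gaussian moments -/

lemma aux_gauss_int {N : ℕ} (hN : 1 ≤ N) (k : ℕ) (F : EuclideanSpace ℝ (Fin N) → ℝ)
    (hF : Continuous F) (hb : ∀ y, |F y| ≤ ‖y‖ ^ k) :
    Integrable (fun y => F y * Real.exp (-‖y‖ ^ 2)) := by
  have h0 : Integrable (fun y : EuclideanSpace ℝ (Fin N) => ‖y‖ ^ k * Real.exp (-‖y‖ ^ 2)) := by
    have : Nonempty (Fin N) := ⟨⟨0, hN⟩⟩
    rw [integrable_fun_norm_addHaar volume (f := fun r => r ^ k * Real.exp (- r ^ 2))]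
    have := integrableOn_rpow_mul_exp_neg_mul_sq (b := 1) one_pos (s := ((N - 1 + k : ℕ) : ℝ))
      (by have : (0:ℝ) ≤ ((N - 1 + k : ℕ) : ℝ) := Nat.cast_nonneg _
          linarith)
    refine this.congr_fun ?_ measurableSet_Ioi
    intro x hx
    simp only [Real.rpow_natCast, finrank_euclideanSpace, Fintype.card_fin, smul_eq_mul]
    rw [pow_add, neg_one_mul]; ring
  refine h0.mono' (by fun_prop) (Filter.Eventually.of_forall fun y => ?_)
  rw [norm_mul, Real.norm_eq_abs, Real.norm_eq_abs, abs_of_pos (Real.exp_pos _)]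
  exact mul_le_mul_of_nonneg_right (hb y) (Real.exp_pos _).le

lemma aux_coord_le {N : ℕ} (y : EuclideanSpace ℝ (Fin N)) (i : Fin N) : |y i| ≤ ‖y‖ := by
  simpa using PiLp.norm_apply_le y i

lemma aux_gauss_pd {N : ℕ} (a : Fin N) (y : EuclideanSpace ℝ (Fin N)) :
    pd N a (fun y => Real.exp (-‖y‖ ^ 2)) y = -2 * y a * Real.exp (-‖y‖ ^ 2) := by
  rw [aux_pd_radial0 a (fun t => Real.exp (-t)) y (by fun_prop)]
  have : deriv (fun t : ℝ => Real.exp (-t)) (‖y‖ ^ 2) = - Real.exp (-‖y‖ ^ 2) := by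
    have h := ((hasDerivAt_id (‖y‖ ^ 2)).neg.exp).deriv
    simpa using h
  rw [this]; ring

lemma aux_gauss_ibp {N : ℕ} (a : Fin N) (F : EuclideanSpace ℝ (Fin N) → ℝ)
    (hF : Differentiable ℝ F)
    (h1 : Integrable (fun y => pd N a F y * Real.exp (-‖y‖ ^ 2)))
    (h2 : Integrable (fun y => (y a * F y) * Real.exp (-‖y‖ ^ 2)))
    (h3 : Integrable (fun y => F y * Real.exp (-‖y‖ ^ 2))) :
    ∫ y, (y a * F y) * Real.exp (-‖y‖ ^ 2) = 1 / 2 * ∫ y, pd N a F y * Real.exp (-‖y‖ ^ 2) := by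
  have e : ∀ y : EuclideanSpace ℝ (Fin N), F y * fderiv ℝ (fun y => Real.exp (-‖y‖ ^ 2)) y (EuclideanSpace.single a 1)
      = -2 * ((y a * F y) * Real.exp (-‖y‖ ^ 2)) := by
    intro y
    have := aux_gauss_pd a y
    unfold pd at this
    rw [this]; ring
  have := integral_mul_fderiv_eq_neg_fderiv_mul_of_integrable (μ := (volume : Measure (EuclideanSpace ℝ (Fin N))))
    (f := F) (g := fun y => Real.exp (-‖y‖ ^ 2))
    (v := EuclideanSpace.single a 1) h1 (by simp_rw [e]; exact h2.const_mul _) h3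
    (fun x _ => hF x) (fun x _ => by
      have : Differentiable ℝ (fun y : EuclideanSpace ℝ (Fin N) => Real.exp (-‖y‖ ^ 2)) :=
        ((contDiff_norm_sq ℝ (n := 1)).differentiable (by norm_num)).neg.exp
      exact this x)
  simp_rw [e] at this
  rw [integral_const_mul] at this
  unfold pd
  linarith

lemma aux_gauss2 {N : ℕ} (hN : 1 ≤ N) (a b : Fin N) :
    ∫ y : EuclideanSpace ℝ (Fin N), (y a * y b) * Real.exp (-‖y‖ ^ 2)
      = 1 / 2 * (if a = b then 1 else 0) * ∫ y : EuclideanSpace ℝ (Fin N), Real.exp (-‖y‖ ^ 2) := by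
  rw [aux_gauss_ibp a (fun y => y b) (aux_coord_diff b)]
  · simp_rw [aux_pd_coord]
    rw [integral_const_mul]; ring
  · simp_rw [aux_pd_coord]
    refine aux_gauss_int hN 0 _ continuous_const fun y => ?_
    split_ifs <;> simp
  · refine aux_gauss_int hN 2 _ ((aux_coord_cont a).mul (aux_coord_cont b)) fun y => ?_
    rw [abs_mul, pow_two]
    have := aux_coord_le y
    gcongr <;> apply this
  · refine aux_gauss_int hN 1 _ ((aux_coord_cont b)) fun y => ?_
    simpa using aux_coord_le y b

lemma aux_gauss_int2 {N : ℕ} (hN : 1 ≤ N) (a b : Fin N) :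
    Integrable (fun y : EuclideanSpace ℝ (Fin N) => (y a * y b) * Real.exp (-‖y‖ ^ 2)) := by
  refine aux_gauss_int hN 2 _ ((aux_coord_cont a).mul (aux_coord_cont b)) fun y => ?_
  rw [abs_mul, pow_two]
  have := aux_coord_le y
  gcongr <;> apply this

lemma aux_gauss_int4 {N : ℕ} (hN : 1 ≤ N) (a b c d : Fin N) :
    Integrable (fun y : EuclideanSpace ℝ (Fin N) => (y a * (y b * (y c * y d))) * Real.exp (-‖y‖ ^ 2)) := by
  refine aux_gauss_int hN 4 _ ((aux_coord_cont a).mul ((aux_coord_cont b).mul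
    ((aux_coord_cont c).mul (aux_coord_cont d)))) fun y => ?_
  rw [abs_mul, abs_mul, abs_mul, show ‖y‖ ^ 4 = ‖y‖ * (‖y‖ * (‖y‖ * ‖y‖)) by ring]
  have := aux_coord_le y
  gcongr <;> apply this

lemma aux_gauss4 {N : ℕ} (hN : 1 ≤ N) (a b c d : Fin N) :
    ∫ y : EuclideanSpace ℝ (Fin N), (y a * (y b * (y c * y d))) * Real.exp (-‖y‖ ^ 2)
      = 1 / 4 * ((if a = b then 1 else 0) * (if c = d then 1 else 0)
        + (if a = c then 1 else 0) * (if b = d then 1 else 0)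
        + (if a = d then 1 else 0) * (if b = c then 1 else 0))
          * ∫ y : EuclideanSpace ℝ (Fin N), Real.exp (-‖y‖ ^ 2) := by
  have e : ∀ y : EuclideanSpace ℝ (Fin N), pd N a (fun y => y b * (y c * y d)) y * Real.exp (-‖y‖ ^ 2)
      = ((if a = b then 1 else 0) * ((y c * y d) * Real.exp (-‖y‖ ^ 2))
        + (if a = c then 1 else 0) * ((y b * y d) * Real.exp (-‖y‖ ^ 2)))
        + (if a = d then 1 else 0) * ((y b * y c) * Real.exp (-‖y‖ ^ 2)) := by
    intro y
    rw [aux_pd_mul a (aux_coord_diff b) ((aux_coord_diff c).fun_mul (aux_coord_diff d)),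
      aux_pd_mul a (aux_coord_diff c) (aux_coord_diff d), aux_pd_coord, aux_pd_coord, aux_pd_coord]
    ring
  have i1 := (aux_gauss_int2 hN c d).const_mul (if a = b then 1 else 0)
  have i2 := (aux_gauss_int2 hN b d).const_mul (if a = c then 1 else 0)
  have i3 := (aux_gauss_int2 hN b c).const_mul (if a = d then 1 else 0)
  have i12 : Integrable (fun y : EuclideanSpace ℝ (Fin N) =>
      (if a = b then 1 else 0) * ((y c * y d) * Real.exp (-‖y‖ ^ 2))
        + (if a = c then 1 else 0) * ((y b * y d) * Real.exp (-‖y‖ ^ 2))) := i1.add i2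
  rw [aux_gauss_ibp a (fun y => y b * (y c * y d))
    ((aux_coord_diff b).mul ((aux_coord_diff c).mul (aux_coord_diff d)))]
  · simp_rw [e]
    rw [integral_add i12 i3, integral_add i1 i2, integral_const_mul, integral_const_mul,
      integral_const_mul, aux_gauss2 hN, aux_gauss2 hN, aux_gauss2 hN]
    ring
  · simp_rw [e]
    exact i12.add i3
  · exact aux_gauss_int4 hN a b c d
  · refine aux_gauss_int hN 3 _ ((aux_coord_cont b).mul
      ((aux_coord_cont c).mul (aux_coord_cont d))) fun y => ?_
    rw [abs_mul, abs_mul, show ‖y‖ ^ 3 = (‖y‖ * (‖y‖ * ‖y‖)) by ring]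
    have := aux_coord_le y
    gcongr <;> apply this

lemma aux_radial_int (n : ℕ) :
    ∫ r in Set.Ioi (0 : ℝ), r ^ n * Real.exp (-r ^ 2) = 1 / 2 * Real.Gamma (((n : ℝ) + 1) / 2) := by
  have := integral_rpow_mul_exp_neg_mul_rpow (p := 2) (q := n) (b := 1) (by norm_num)
    (by have : (0:ℝ) ≤ n := Nat.cast_nonneg _
        linarith) one_pos
  simpa using this

lemma aux_sphere4 {N : ℕ} (hN : 1 ≤ N) (a b c d : Fin N) :
    ∫ ω, ((ω : EuclideanSpace ℝ (Fin N)) a * ((ω : EuclideanSpace ℝ (Fin N)) b *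
      ((ω : EuclideanSpace ℝ (Fin N)) c * (ω : EuclideanSpace ℝ (Fin N)) d))) ∂(sphereMeasure N)
      = sphereArea N / (N * (N + 2)) * ((if a = b then 1 else 0) * (if c = d then 1 else 0)
        + (if a = c then 1 else 0) * (if b = d then 1 else 0)
        + (if a = d then 1 else 0) * (if b = c then 1 else 0)) := by
  have h0 := aux_polar N hN (fun r => Real.exp (-r ^ 2)) (fun _ => 1) 0 (by simp)
  have h4 := aux_polar N hN (fun r => Real.exp (-r ^ 2))
    (fun y => y a * (y b * (y c * y d))) 4 (by intro r y hr; simp; ring)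
  have hg := aux_gauss4 hN a b c d
  simp only [mul_one, pow_zero] at h0
  rw [aux_radial_int (N - 1)] at h0
  have e4 : ∀ r : ℝ, r ^ (N - 1) * (Real.exp (-r ^ 2) * r ^ 4) = r ^ (N + 3) * Real.exp (-r ^ 2) := by
    intro r
    have : N + 3 = (N - 1) + 4 := by omega
    rw [this, pow_add]; ring
  simp_rw [e4] at h4
  rw [aux_radial_int (N + 3)] at h4
  have hs : ∫ _ω, (1:ℝ) ∂(sphereMeasure N) = sphereArea N := by
    simp [sphereArea, Measure.real]
  rw [hs] at h0
  have hNpos : (0:ℝ) < N := by exact_mod_cast hN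
  have c1 : (((N - 1 : ℕ) : ℝ) + 1) / 2 = (N:ℝ) / 2 := by
    rw [Nat.cast_sub hN]; simp
  have c2 : (((N + 3 : ℕ) : ℝ) + 1) / 2 = ((N:ℝ) / 2 + 1) + 1 := by
    push_cast; ring
  rw [c1] at h0
  rw [c2, Real.Gamma_add_one (by positivity), Real.Gamma_add_one (by positivity)] at h4
  simp_rw [mul_comm (Real.exp _)] at h4
  rw [hg, h0] at h4
  have hG : 0 < Real.Gamma ((N:ℝ) / 2) := Real.Gamma_pos_of_pos (by positivity)
  set G := Real.Gamma ((N:ℝ) / 2)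
  set I := ∫ ω, ((ω : EuclideanSpace ℝ (Fin N)) a * ((ω : EuclideanSpace ℝ (Fin N)) b *
      ((ω : EuclideanSpace ℝ (Fin N)) c * (ω : EuclideanSpace ℝ (Fin N)) d))) ∂(sphereMeasure N)
  set D : ℝ := ((if a = b then 1 else 0) * (if c = d then 1 else 0)
        + (if a = c then 1 else 0) * (if b = d then 1 else 0)
        + (if a = d then 1 else 0) * (if b = c then 1 else 0))
  have h5 : I * (N * (N + 2)) = sphereArea N * D := by
    have : G * (I * (N * (N + 2))) = G * (sphereArea N * D) := by linarith
    exact mul_left_cancel₀ hG.ne' this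
  field_simp
  linarith

lemma aux_pd_sum {N : ℕ} (i : Fin N) {ι : Type} [Fintype ι] (f : ι → EuclideanSpace ℝ (Fin N) → ℝ)
    (hf : ∀ k, Differentiable ℝ (f k)) (y) :
    pd N i (fun y => ∑ k, f k y) y = ∑ k, pd N i (f k) y := by
  unfold pd
  rw [fderiv_fun_sum (fun k _ => hf k y)]
  simp

lemma aux_pd_cmul {N : ℕ} (i : Fin N) (c : ℝ) {f : EuclideanSpace ℝ (Fin N) → ℝ}
    (hf : Differentiable ℝ f) (y) :
    pd N i (fun y => c * f y) y = c * pd N i f y := by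
  unfold pd
  rw [fderiv_const_mul (hf y)]
  simp

lemma aux_H_diff {N : ℕ} (W : Fin N → Fin N → Fin N → Fin N → ℝ) (j s : Fin N) :
    Differentiable ℝ (Hmat N W j s) := by
  unfold Hmat
  refine Differentiable.fun_sum fun p _ => Differentiable.fun_sum fun q _ => ?_
  exact ((aux_coord_diff p).const_mul _).fun_mul (aux_coord_diff q)

lemma aux_pd_H {N : ℕ} (W : Fin N → Fin N → Fin N → Fin N → ℝ) (m j s : Fin N)
    (y : EuclideanSpace ℝ (Fin N)) :
    pd N m (Hmat N W j s) y = ∑ q, (W j m s q + W j q s m) * y q := by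
  unfold Hmat
  have d1 : ∀ p q, Differentiable ℝ (fun y : EuclideanSpace ℝ (Fin N) => W j p s q * y p * y q) :=
    fun p q => ((aux_coord_diff p).const_mul _).fun_mul (aux_coord_diff q)
  rw [aux_pd_sum m (fun p y => ∑ q, W j p s q * y p * y q)
    (fun p => Differentiable.fun_sum fun q _ => d1 p q)]
  have : ∀ p, pd N m (fun y => ∑ q, W j p s q * y p * y q) y
      = ∑ q, ((if m = p then W j p s q * y q else 0) + (if m = q then W j p s q * y p else 0)) := by
    intro p
    rw [aux_pd_sum m (fun q y => W j p s q * y p * y q) (fun q => d1 p q)]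
    refine Finset.sum_congr rfl fun q _ => ?_
    rw [aux_pd_mul m ((aux_coord_diff p).const_mul _) (aux_coord_diff q),
      aux_pd_cmul m _ (aux_coord_diff p), aux_pd_coord, aux_pd_coord]
    split_ifs <;> ring
  simp_rw [this, Finset.sum_add_distrib, add_mul, Finset.sum_add_distrib]
  congr 1
  · rw [Finset.sum_comm]; simp
  · simp

lemma aux_pd_L {N : ℕ} (c : Fin N → ℝ) (m : Fin N) (y : EuclideanSpace ℝ (Fin N)) :
    pd N m (fun y => ∑ q, c q * y q) y = c m := by
  rw [aux_pd_sum m (fun q y => c q * y q) (fun q => (aux_coord_diff q).const_mul _)]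
  simp_rw [aux_pd_cmul m _ (aux_coord_diff _), aux_pd_coord]
  simp

lemma aux_L_diff {N : ℕ} (c : Fin N → ℝ) :
    Differentiable ℝ (fun y : EuclideanSpace ℝ (Fin N) => ∑ q, c q * y q) :=
  Differentiable.fun_sum fun q _ => (aux_coord_diff q).const_mul _

lemma aux_rad_diff {N : ℕ} (f : ℝ → ℝ) (hf : Differentiable ℝ f) :
    Differentiable ℝ (fun y : EuclideanSpace ℝ (Fin N) => f (‖y‖ ^ 2)) :=
  hf.comp ((contDiff_norm_sq ℝ (n := 1)).differentiable (by norm_num))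

lemma aux_pd2_Hbar {N : ℕ} (W : Fin N → Fin N → Fin N → Fin N → ℝ) (f : ℝ → ℝ)
    (hf : Differentiable ℝ f) (hf2 : Differentiable ℝ (deriv f)) (m j s : Fin N)
    (y : EuclideanSpace ℝ (Fin N)) :
    pd N m (pd N m (Hbar N W f j s)) y
      = 2 * deriv f (‖y‖ ^ 2) * Hmat N W j s y
        + 4 * deriv (deriv f) (‖y‖ ^ 2) * Hmat N W j s y * (y m * y m)
        + 4 * deriv f (‖y‖ ^ 2) * (y m * ∑ q, (W j m s q + W j q s m) * y q)
        + 2 * f (‖y‖ ^ 2) * W j m s m := by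
  have e1 : pd N m (Hbar N W f j s) = fun y =>
      2 * (y m * (deriv f (‖y‖ ^ 2) * Hmat N W j s y))
        + f (‖y‖ ^ 2) * ∑ q, (W j m s q + W j q s m) * y q := by
    funext y
    unfold Hbar
    rw [aux_pd_mul m (aux_rad_diff f hf) (aux_H_diff W j s), aux_pd_radial0 m f y (hf _), aux_pd_H]
    ring
  have d1 : Differentiable ℝ (fun y : EuclideanSpace ℝ (Fin N) => deriv f (‖y‖ ^ 2) * Hmat N W j s y) :=
    (aux_rad_diff _ hf2).fun_mul (aux_H_diff W j s)
  rw [e1, aux_pd_add m (((aux_coord_diff m).fun_mul d1).const_mul 2)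
      ((aux_rad_diff f hf).fun_mul (aux_L_diff _)),
    aux_pd_cmul m 2 ((aux_coord_diff m).fun_mul d1),
    aux_pd_mul m (aux_coord_diff m) d1, aux_pd_mul m (aux_rad_diff _ hf2) (aux_H_diff W j s),
    aux_pd_mul m (aux_rad_diff f hf) (aux_L_diff _), aux_pd_L, aux_pd_H,
    aux_pd_radial0 m f y (hf _), aux_pd_radial0 m (deriv f) y (hf2 _), aux_pd_coord]
  simp only [if_true]
  ring

lemma aux_euler {N : ℕ} (W : Fin N → Fin N → Fin N → Fin N → ℝ) (j s : Fin N)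
    (y : EuclideanSpace ℝ (Fin N)) :
    ∑ m, y m * ∑ q, (W j m s q + W j q s m) * y q = 2 * Hmat N W j s y := by
  simp_rw [Finset.mul_sum, add_mul, mul_add, Finset.sum_add_distrib]
  rw [two_mul]
  unfold Hmat
  congr 1
  · refine Finset.sum_congr rfl fun p _ => Finset.sum_congr rfl fun q _ => by ring
  · rw [Finset.sum_comm]
    refine Finset.sum_congr rfl fun p _ => Finset.sum_congr rfl fun q _ => by ring

lemma aux_normsq {N : ℕ} (y : EuclideanSpace ℝ (Fin N)) : ∑ m, y m * y m = ‖y‖ ^ 2 := by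
  rw [EuclideanSpace.real_norm_sq_eq]
  exact Finset.sum_congr rfl fun i _ => by ring

lemma aux_lap {N : ℕ} (W : Fin N → Fin N → Fin N → Fin N → ℝ)
    (hT : ∀ j s, ∑ m, W j m s m = 0) (f : ℝ → ℝ)
    (hf : Differentiable ℝ f) (hf2 : Differentiable ℝ (deriv f)) (j s : Fin N)
    (y : EuclideanSpace ℝ (Fin N)) :
    ∑ m, pd N m (pd N m (Hbar N W f j s)) y
      = 2 * (((N:ℝ) + 4) * deriv f (‖y‖ ^ 2) + 2 * ‖y‖ ^ 2 * deriv (deriv f) (‖y‖ ^ 2))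
        * Hmat N W j s y := by
  simp_rw [aux_pd2_Hbar W f hf hf2, Finset.sum_add_distrib, ← Finset.mul_sum, hT, aux_euler, aux_normsq]
  simp
  ring

lemma aux_pd_U {N : ℕ} (hN : 25 ≤ N) (lam : ℝ) (hl : 0 < lam) (ξ y : EuclideanSpace ℝ (Fin N))
    (u : EuclideanSpace ℝ (Fin N) → ℝ)
    (hu : ∀ y, u y = (lam / (lam ^ 2 + ‖y - ξ‖ ^ 2)) ^ (((N : ℝ) - 4) / 2)) (i j : Fin N) :
    pd N i u y * pd N j u y = (((N:ℝ) - 4) ^ 2 * lam ^ (N - 4) / (lam ^ 2 + ‖y - ξ‖ ^ 2) ^ (N - 2))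
      * ((y i - ξ i) * (y j - ξ j)) := by
  obtain rfl : u = fun y => (lam / (lam ^ 2 + ‖y - ξ‖ ^ 2)) ^ (((N : ℝ) - 4) / 2) := funext hu
  set t := ‖y - ξ‖ ^ 2 with ht
  have ht0 : 0 ≤ t := by positivity
  have hD : 0 < lam ^ 2 + t := by positivity
  have hX : 0 < lam / (lam ^ 2 + t) := by positivity
  have hd : HasDerivAt (fun t => (lam / (lam ^ 2 + t)) ^ (((N : ℝ) - 4) / 2))
      (-(((N : ℝ) - 4) / 2) * (lam / (lam ^ 2 + t)) ^ (((N : ℝ) - 2) / 2) / lam) t := by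
    have h1 : HasDerivAt (fun t => lam / (lam ^ 2 + t)) (-lam / (lam ^ 2 + t) ^ 2) t := by
      have := (hasDerivAt_const t lam).fun_div ((hasDerivAt_id t).const_add (lam ^ 2)) hD.ne'
      simpa using this
    have h2 := h1.rpow_const (p := ((N : ℝ) - 4) / 2) (Or.inl hX.ne')
    convert h2 using 1
    have : ((N : ℝ) - 2) / 2 = (((N : ℝ) - 4) / 2 - 1) + (2 : ℕ) := by push_cast; ring
    rw [this, Real.rpow_add hX, Real.rpow_natCast]
    field_simp
  have hp : ∀ i, pd N i (fun y => (lam / (lam ^ 2 + ‖y - ξ‖ ^ 2)) ^ (((N : ℝ) - 4) / 2)) y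
      = 2 * (y i - ξ i) * (-(((N : ℝ) - 4) / 2) * (lam / (lam ^ 2 + t)) ^ (((N : ℝ) - 2) / 2) / lam) := by
    intro i
    rw [aux_pd_radial i (fun t => (lam / (lam ^ 2 + t)) ^ (((N : ℝ) - 4) / 2)) ξ y hd.differentiableAt,
      hd.deriv]
  rw [hp, hp]
  have hsq : (lam / (lam ^ 2 + t)) ^ (((N : ℝ) - 2) / 2) * (lam / (lam ^ 2 + t)) ^ (((N : ℝ) - 2) / 2)
      = lam ^ (N - 4) * lam ^ 2 / (lam ^ 2 + t) ^ (N - 2) := by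
    rw [← Real.rpow_add hX, ← pow_add, show N - 4 + 2 = N - 2 by omega, ← div_pow, ← Real.rpow_natCast (lam / (lam ^ 2 + t)) (N - 2)]
    congr 1
    rw [Nat.cast_sub (by omega)]; push_cast; ring
  calc _ = ((N:ℝ) - 4) ^ 2 * ((y i - ξ i) * (y j - ξ j)) / lam ^ 2 *
        ((lam / (lam ^ 2 + t)) ^ (((N : ℝ) - 2) / 2) * (lam / (lam ^ 2 + t)) ^ (((N : ℝ) - 2) / 2)) := by
        ring
    _ = _ := by
        rw [hsq]; field_simp

lemma aux_H_symm {N : ℕ} (W : Fin N → Fin N → Fin N → Fin N → ℝ)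
    (hW3 : ∀ i p j q, W i p j q = W j q i p) (i j : Fin N) (y) :
    Hmat N W i j y = Hmat N W j i y := by
  unfold Hmat
  rw [Finset.sum_comm]
  refine Finset.sum_congr rfl fun p _ => Finset.sum_congr rfl fun q _ => ?_
  rw [hW3 i q j p]; ring

lemma aux_H_y {N : ℕ} (W : Fin N → Fin N → Fin N → Fin N → ℝ)
    (hW2 : ∀ i p j q, W i p j q = - W i p q j) (s : Fin N) (y : EuclideanSpace ℝ (Fin N)) :
    ∑ i, Hmat N W s i y * y i = 0 := by
  have h : ∑ i, Hmat N W s i y * y i = ∑ p, ∑ i, ∑ q, W s p i q * y p * y q * y i := by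
    unfold Hmat
    simp_rw [Finset.sum_mul]
    rw [Finset.sum_comm]
  rw [h]
  refine Finset.sum_eq_zero fun p _ => ?_
  have h2 : ∑ i, ∑ q, W s p i q * y p * y q * y i = - ∑ i, ∑ q, W s p i q * y p * y q * y i := by
    conv_lhs => rw [Finset.sum_comm]
    rw [← Finset.sum_neg_distrib]
    refine Finset.sum_congr rfl fun i _ => ?_
    rw [← Finset.sum_neg_distrib]
    refine Finset.sum_congr rfl fun q _ => ?_
    rw [hW2 s p q i]; ring
  linarith

lemma aux_quad {N : ℕ} (W : Fin N → Fin N → Fin N → Fin N → ℝ)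
    (hW2 : ∀ i p j q, W i p j q = - W i p q j)
    (hW3 : ∀ i p j q, W i p j q = W j q i p) (y ξ : EuclideanSpace ℝ (Fin N)) :
    ∑ i, ∑ j, ∑ s, (Hmat N W s i y * (y i - ξ i)) * (Hmat N W j s y * (y j - ξ j))
      = ∑ s, (∑ i, Hmat N W s i y * ξ i) ^ 2 := by
  have h1 : ∀ s, ∑ i, Hmat N W s i y * (y i - ξ i) = - ∑ i, Hmat N W s i y * ξ i := by
    intro s
    simp_rw [mul_sub, Finset.sum_sub_distrib, aux_H_y W hW2]; ring
  have h2 : ∀ s, (∑ i, Hmat N W s i y * ξ i) ^ 2 =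
      ∑ i, ∑ j, (Hmat N W s i y * (y i - ξ i)) * (Hmat N W j s y * (y j - ξ j)) := by
    intro s
    simp_rw [aux_H_symm W hW3 _ s]
    rw [← Finset.sum_mul_sum, h1]; ring
  simp_rw [h2]
  rw [Finset.sum_comm' (t' := Finset.univ) (s' := fun _ => Finset.univ) (by simp)]
  conv_rhs => rw [Finset.sum_comm]
  rw [Finset.sum_comm]
  refine Finset.sum_congr rfl fun i _ => ?_
  rw [Finset.sum_comm]

lemma aux_E {N : ℕ} (hN : 25 ≤ N)
    (W : Fin N → Fin N → Fin N → Fin N → ℝ)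
    (hW2 : ∀ i p j q, W i p j q = - W i p q j)
    (hW3 : ∀ i p j q, W i p j q = W j q i p)
    (hT : ∀ j s, ∑ m, W j m s m = 0)
    (f : ℝ → ℝ) (hf : Differentiable ℝ f) (hf2 : Differentiable ℝ (deriv f))
    (lam : ℝ) (hl : 0 < lam) (ξ y : EuclideanSpace ℝ (Fin N))
    (u : EuclideanSpace ℝ (Fin N) → ℝ)
    (hu : ∀ y, u y = (lam / (lam ^ 2 + ‖y - ξ‖ ^ 2)) ^ (((N : ℝ) - 4) / 2)) :
    ∑ i : Fin N, ∑ j : Fin N, ∑ m : Fin N, ∑ s : Fin N,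
            Hbar N W f s i y * pd N m (pd N m (Hbar N W f j s)) y * pd N i u y * pd N j u y
      = (2 * ((N:ℝ) - 4) ^ 2 * lam ^ (N - 4) * (((N : ℝ) + 4) * f (‖y‖ ^ 2) * deriv f (‖y‖ ^ 2)
                    + 2 * ‖y‖ ^ 2 * f (‖y‖ ^ 2) * deriv (deriv f) (‖y‖ ^ 2)))
         / (lam ^ 2 + ‖y - ξ‖ ^ 2) ^ (N - 2) * ∑ s, (∑ i, Hmat N W s i y * ξ i) ^ 2 := by
  rw [← aux_quad W hW2 hW3 y ξ]
  simp_rw [Finset.mul_sum]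
  refine Finset.sum_congr rfl fun i _ => Finset.sum_congr rfl fun j _ => ?_
  rw [Finset.sum_comm]
  refine Finset.sum_congr rfl fun s _ => ?_
  simp_rw [mul_assoc _ (pd N i u y) (pd N j u y)]
  rw [← Finset.sum_mul, ← Finset.mul_sum, aux_lap W hT f hf hf2, aux_pd_U hN lam hl ξ y u hu]
  unfold Hbar
  ring

lemma aux_deriv_mul_self (h : ℝ → ℝ) (hh : ContinuousAt h 0) :
    deriv (fun a => a * h a) 0 = h 0 := by
  refine HasDerivAt.deriv ?_
  rw [hasDerivAt_iff_tendsto_slope]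
  refine (hh.tendsto.mono_left nhdsWithin_le_nhds).congr' ?_
  filter_upwards [self_mem_nhdsWithin] with a ha
  have : a ≠ 0 := ha
  simp [slope_def_field, this]

lemma aux_d2 {N : ℕ} (p q : Fin N) (y : EuclideanSpace ℝ (Fin N)) (lam : ℝ) (hl : 0 < lam)
    (A : ℝ) (n : ℕ) (H : Fin N → Fin N → ℝ) :
    d2Param N p q (fun ξ => A / (lam ^ 2 + ‖y - ξ‖ ^ 2) ^ n * ∑ s, (∑ i, H s i * ξ i) ^ 2)
      = 2 * A / (lam ^ 2 + ‖y‖ ^ 2) ^ n * ∑ s, H s p * H s q := by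
  unfold d2Param
  set ep : EuclideanSpace ℝ (Fin N) := EuclideanSpace.single p (1 : ℝ) with hep
  set eq : EuclideanSpace ℝ (Fin N) := EuclideanSpace.single q (1 : ℝ) with heq
  have hlin : ∀ a b : ℝ, ∑ s, (∑ i, H s i * (a • ep + b • eq) i) ^ 2
      = a ^ 2 * ∑ s, H s p ^ 2 + b * (2 * a * ∑ s, H s p * H s q + b * ∑ s, H s q ^ 2) := by
    intro a b
    have : ∀ s, ∑ i, H s i * (a • ep + b • eq) i = a * H s p + b * H s q := by
      intro s
      simp [hep, heq, mul_add, Finset.sum_add_distrib]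
      ring
    simp_rw [this, mul_add, Finset.mul_sum, ← Finset.sum_add_distrib]
    refine Finset.sum_congr rfl fun s _ => by ring
  simp_rw [hlin]
  set α := ∑ s, H s p ^ 2
  set β := ∑ s, H s p * H s q
  set γ := ∑ s, H s q ^ 2
  have hD : ∀ a : ℝ, HasDerivAt (fun b : ℝ => lam ^ 2 + ‖y - (a • ep + b • eq)‖ ^ 2)
      (2 * inner ℝ (y - a • ep) (-eq)) 0 := by
    intro a
    have h1 : HasDerivAt (fun b : ℝ => y - (a • ep + b • eq)) (-eq) 0 := by
      have := (((hasDerivAt_id (0:ℝ)).smul_const eq).const_add (a • ep)).const_sub y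
      simpa using this
    have := (h1.norm_sq).const_add (lam ^ 2)
    simpa using this
  have hpos : ∀ z : EuclideanSpace ℝ (Fin N), lam ^ 2 + ‖z‖ ^ 2 ≠ 0 := fun z => by positivity
  have hin : ∀ a : ℝ, deriv (fun b : ℝ => A / (lam ^ 2 + ‖y - (a • ep + b • eq)‖ ^ 2) ^ n *
      (a ^ 2 * α + b * (2 * a * β + b * γ))) 0 =
      a * (a * (-(A * (n * (lam ^ 2 + ‖y - a • ep‖ ^ 2) ^ (n - 1) *
        (2 * inner ℝ (y - a • ep) (-eq)))) / ((lam ^ 2 + ‖y - a • ep‖ ^ 2) ^ n) ^ 2 * α)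
        + A / (lam ^ 2 + ‖y - a • ep‖ ^ 2) ^ n * (2 * β)) := by
    intro a
    have h1 := (hasDerivAt_const (0:ℝ) A).div ((hD a).pow n) (pow_ne_zero _ (hpos _))
    have h2 : HasDerivAt (fun b : ℝ => a ^ 2 * α + b * (2 * a * β + b * γ)) (2 * a * β) 0 := by
      have := ((hasDerivAt_id (0:ℝ)).mul (((hasDerivAt_id (0:ℝ)).mul_const γ).const_add (2 * a * β))).const_add (a ^ 2 * α)
      simpa using this
    have h3 := (h1.mul h2).deriv
    simp only [zero_smul, add_zero, zero_mul, Pi.pow_apply, zero_sub] at h3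
    refine Eq.trans h3 ?_
    simp
    ring
  simp_rw [hin]
  rw [aux_deriv_mul_self]
  · simp; ring
  · have hc : Continuous fun a : ℝ => y - a • ep := by fun_prop
    refine Continuous.continuousAt ?_
    have hc2 : ∀ a : ℝ, lam ^ 2 + ‖y - a • ep‖ ^ 2 ≠ 0 := fun a => hpos _
    have hc3 : ∀ a : ℝ, (lam ^ 2 + ‖y - a • ep‖ ^ 2) ^ n ≠ 0 := fun a => pow_ne_zero _ (hpos _)
    have hc4 : ∀ a : ℝ, ((lam ^ 2 + ‖y - a • ep‖ ^ 2) ^ n) ^ 2 ≠ 0 := fun a => pow_ne_zero _ (hc3 _)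
    fun_prop (disch := assumption)

lemma aux_sphereH {N : ℕ} (hN : 1 ≤ N)
    (W : Fin N → Fin N → Fin N → Fin N → ℝ)
    (hT : ∀ j s, ∑ m, W j m s m = 0) (s p t q : Fin N) :
    ∫ ω, Hmat N W s p (ω : EuclideanSpace ℝ (Fin N)) * Hmat N W t q ω ∂(sphereMeasure N)
      = sphereArea N / (N * (N + 2)) * ∑ a, ∑ b, W s a p b * (W t a q b + W t b q a) := by
  have : IsFiniteMeasure (sphereMeasure N) := by unfold sphereMeasure; infer_instance
  have h1 : ∀ ω : Metric.sphere (0 : EuclideanSpace ℝ (Fin N)) 1,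
      Hmat N W s p (ω : EuclideanSpace ℝ (Fin N)) * Hmat N W t q ω
      = ∑ a, ∑ b, ∑ c, ∑ d, (W s a p b * W t c q d) * ((ω : EuclideanSpace ℝ (Fin N)) a *
        ((ω : EuclideanSpace ℝ (Fin N)) b * ((ω : EuclideanSpace ℝ (Fin N)) c * (ω : EuclideanSpace ℝ (Fin N)) d))) := by
    intro ω
    unfold Hmat
    simp_rw [Finset.sum_mul, Finset.mul_sum]
    refine Finset.sum_congr rfl fun a _ => Finset.sum_congr rfl fun b _ =>
      Finset.sum_congr rfl fun c _ => Finset.sum_congr rfl fun d _ => by ring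
  have hi : ∀ a b c d, Integrable (fun ω : Metric.sphere (0 : EuclideanSpace ℝ (Fin N)) 1 =>
      (W s a p b * W t c q d) * ((ω : EuclideanSpace ℝ (Fin N)) a *
        ((ω : EuclideanSpace ℝ (Fin N)) b * ((ω : EuclideanSpace ℝ (Fin N)) c * (ω : EuclideanSpace ℝ (Fin N)) d))))
      (sphereMeasure N) := by
    intro a b c d
    have hc : ∀ a, Continuous (fun ω : Metric.sphere (0 : EuclideanSpace ℝ (Fin N)) 1 =>
      (ω : EuclideanSpace ℝ (Fin N)) a) := fun a => (aux_coord_cont a).comp continuous_subtype_val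
    exact (continuous_const.mul ((hc a).mul ((hc b).mul ((hc c).mul (hc d))))).integrable_of_hasCompactSupport
      (HasCompactSupport.of_compactSpace _)
  simp_rw [h1]
  rw [integral_finsetSum _ (fun a _ => integrable_finsetSum _ fun b _ => integrable_finsetSum _ fun c _ =>
    integrable_finsetSum _ fun d _ => hi a b c d)]
  simp_rw [integral_finsetSum Finset.univ (fun b _ => integrable_finsetSum _ fun c _ =>
    integrable_finsetSum _ fun d _ => hi _ b c d),
    integral_finsetSum Finset.univ (fun c _ => integrable_finsetSum _ fun d _ => hi _ _ c d),
    integral_finsetSum Finset.univ (fun d _ => hi _ _ _ d), integral_const_mul, aux_sphere4 hN]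
  set K := sphereArea N / (N * (N + 2))
  have h2 : ∀ a b, ∑ c, ∑ d, (W s a p b * W t c q d) * (K * ((if a = b then 1 else 0) * (if c = d then 1 else 0)
        + (if a = c then 1 else 0) * (if b = d then 1 else 0)
        + (if a = d then 1 else 0) * (if b = c then 1 else 0)))
      = K * (W s a p b * (W t a q b + W t b q a)) := by
    intro a b
    have e : ∀ c d, (W s a p b * W t c q d) * (K * ((if a = b then 1 else 0) * (if c = d then 1 else 0)
        + (if a = c then 1 else 0) * (if b = d then 1 else 0)
        + (if a = d then 1 else 0) * (if b = c then 1 else 0)))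
      = (K * W s a p b * (if a = b then 1 else 0)) * (if c = d then W t c q d else 0)
        + (if a = c then (if b = d then K * W s a p b * W t c q d else 0) else 0)
        + (if b = c then (if a = d then K * W s a p b * W t c q d else 0) else 0) := by
      intro c d
      split_ifs <;> ring
    simp_rw [e, Finset.sum_add_distrib, ← Finset.mul_sum]
    simp [hT]
    ring
  refine (Finset.sum_congr rfl fun a _ => Finset.sum_congr rfl fun b _ => h2 a b).trans ?_
  simp_rw [← Finset.mul_sum]

lemma aux_alg {N : ℕ} (W : Fin N → Fin N → Fin N → Fin N → ℝ)
    (hW1 : ∀ i p j q, W i p j q = - W p i j q)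
    (hW2 : ∀ i p j q, W i p j q = - W i p q j)
    (hW3 : ∀ i p j q, W i p j q = W j q i p) (p q : Fin N) :
    ∑ i : Fin N, ∑ j : Fin N, ∑ k : Fin N, (W i k j p + W i p j k) * (W i k j q + W i q j k)
      = 2 * ∑ s, ∑ a, ∑ b, W s a p b * (W s a q b + W s b q a) := by
  have hA : ∑ s, ∑ a, ∑ b, W s a p b * (W s a q b + W s b q a)
      = ∑ i, ∑ j, ∑ k, (W i k j p * W i k j q + W i k j p * W i q j k) := by
    rw [Finset.sum_comm]
    refine Finset.sum_congr rfl fun i _ => ?_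
    rw [Finset.sum_comm]
    refine Finset.sum_congr rfl fun j _ => Finset.sum_congr rfl fun k _ => ?_
    rw [hW1 k i p j, hW2 i k p j, hW1 k i q j, hW2 i k q j, hW3 k j q i, hW1 q i k j, hW2 i q k j]
    ring
  have hB : ∑ i, ∑ j, ∑ k, (W i p j k * W i k j q + W i p j k * W i q j k)
      = ∑ i, ∑ j, ∑ k, (W i k j p * W i k j q + W i k j p * W i q j k) := by
    rw [Finset.sum_comm]
    refine Finset.sum_congr rfl fun i _ => Finset.sum_congr rfl fun j _ => Finset.sum_congr rfl fun k _ => ?_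
    rw [hW3 j p i k, hW3 j k i q, hW3 j q i k]
    ring
  rw [hA, two_mul]
  nth_rewrite 2 [← hB]
  simp_rw [← Finset.sum_add_distrib]
  refine Finset.sum_congr rfl fun i _ => Finset.sum_congr rfl fun j _ => Finset.sum_congr rfl fun k _ => ?_
  ring
theorem stmt_18 (N : ℕ) (hN : 25 ≤ N)
    (W : Fin N → Fin N → Fin N → Fin N → ℝ)
    (hW1 : ∀ i p j q, W i p j q = - W p i j q)
    (hW2 : ∀ i p j q, W i p j q = - W i p q j)
    (hW3 : ∀ i p j q, W i p j q = W j q i p)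
    (hBianchi : ∀ i p j q, W i p j q + W i j q p + W i q p j = 0)
    (hTrace : ∀ p q, ∑ i : Fin N, W i p i q = 0)
    (f : ℝ → ℝ)
    (hf : ∃ P : Polynomial ℝ, P.degree ≤ 4 ∧ ∀ x, f x = P.eval x)
    (lam' : ℝ) (hlam' : 0 < lam')
    (U : EuclideanSpace ℝ (Fin N) → EuclideanSpace ℝ (Fin N) → ℝ)
    (hU : ∀ ξ' y, U ξ' y = (lam' / (lam' ^ 2 + ‖y - ξ'‖ ^ 2)) ^ (((N : ℝ) - 4) / 2))
    (E : EuclideanSpace ℝ (Fin N) → EuclideanSpace ℝ (Fin N) → ℝ)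
    (hE : ∀ y ξ', E y ξ'
        = ∑ i : Fin N, ∑ j : Fin N, ∑ m : Fin N, ∑ s : Fin N,
            Hbar N W f s i y * pd N m (pd N m (Hbar N W f j s)) y
              * pd N i (U ξ') y * pd N j (U ξ') y) :
    ((∫ y : EuclideanSpace ℝ (Fin N), E y 0) = 0) ∧
    (∀ p q : Fin N,
      (∫ y : EuclideanSpace ℝ (Fin N), d2Param N p q (E y))
        = sphereArea N
            * (∑ i : Fin N, ∑ j : Fin N, ∑ k : Fin N,
                (W i k j p + W i p j k) * (W i k j q + W i q j k))
            * lam' ^ (N - 4)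
            * (2 * ((N : ℝ) - 4) ^ 2 / (N * ((N : ℝ) + 2)))
            * ∫ r in Set.Ioi (0 : ℝ),
                (((N : ℝ) + 4) * f (r ^ 2) * deriv f (r ^ 2)
                    + 2 * r ^ 2 * f (r ^ 2) * deriv (deriv f) (r ^ 2))
                  * r ^ (N + 3) / (lam' ^ 2 + r ^ 2) ^ (N - 2)) := by
  obtain ⟨P, -, hP⟩ := hf
  obtain rfl : f = fun x => P.eval x := funext hP
  have hd1 : deriv (fun x => P.eval x) = fun x => P.derivative.eval x := by
    funext x; exact P.deriv
  have hf1 : Differentiable ℝ (fun x => P.eval x) := P.differentiable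
  have hf2 : Differentiable ℝ (deriv fun x => P.eval x) := by
    rw [hd1]; exact P.derivative.differentiable
  set f : ℝ → ℝ := fun x => P.eval x
  have hT : ∀ j s, ∑ m, W j m s m = 0 := by
    intro j s
    rw [← hTrace j s]
    refine Finset.sum_congr rfl fun m _ => ?_
    rw [hW1 j m s m, hW2 m j s m, neg_neg]
  have hE' : ∀ y, E y = fun ξ => (2 * ((N:ℝ) - 4) ^ 2 * lam' ^ (N - 4) *
      (((N : ℝ) + 4) * f (‖y‖ ^ 2) * deriv f (‖y‖ ^ 2)
        + 2 * ‖y‖ ^ 2 * f (‖y‖ ^ 2) * deriv (deriv f) (‖y‖ ^ 2)))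
         / (lam' ^ 2 + ‖y - ξ‖ ^ 2) ^ (N - 2) * ∑ s, (∑ i, Hmat N W s i y * ξ i) ^ 2 := by
    intro y
    funext ξ
    rw [hE, aux_E hN W hW2 hW3 hT f hf1 hf2 lam' hlam' ξ y (U ξ) (hU ξ)]
  have hN1 : 1 ≤ N := by omega
  have : IsFiniteMeasure (sphereMeasure N) := by unfold sphereMeasure; infer_instance
  refine ⟨by simp [hE'], fun p q => ?_⟩
  simp_rw [hE', aux_d2 p q _ lam' hlam']
  have hp := aux_polar N hN1 (fun r => 2 * (2 * ((N:ℝ) - 4) ^ 2 * lam' ^ (N - 4) *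
      (((N : ℝ) + 4) * f (r ^ 2) * deriv f (r ^ 2)
        + 2 * r ^ 2 * f (r ^ 2) * deriv (deriv f) (r ^ 2)))
         / (lam' ^ 2 + r ^ 2) ^ (N - 2)) (fun y => ∑ s, Hmat N W s p y * Hmat N W s q y) 4 (by
    intro r y _
    have : ∀ i j, Hmat N W i j (r • y) = r ^ 2 * Hmat N W i j y := by
      intro i j
      unfold Hmat
      simp_rw [Finset.mul_sum]
      refine Finset.sum_congr rfl fun a _ => Finset.sum_congr rfl fun b _ => ?_
      simp; ring
    simp_rw [this, Finset.mul_sum]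
    refine Finset.sum_congr rfl fun a _ => by ring)
  rw [hp]
  have hs : ∫ ω, ∑ s, Hmat N W s p (ω : EuclideanSpace ℝ (Fin N)) * Hmat N W s q ω ∂(sphereMeasure N)
      = sphereArea N / (N * (N + 2)) * ∑ s, ∑ a, ∑ b, W s a p b * (W s a q b + W s b q a) := by
    rw [integral_finsetSum]
    · simp_rw [aux_sphereH hN1 W hT, Finset.mul_sum]
    · intro s _
      have hc : ∀ i, Continuous (fun ω : Metric.sphere (0 : EuclideanSpace ℝ (Fin N)) 1 =>
        Hmat N W s i ω) := fun i => (aux_H_diff W s i).continuous.comp continuous_subtype_val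
      exact ((hc p).mul (hc q)).integrable_of_hasCompactSupport (HasCompactSupport.of_compactSpace _)
  rw [hs, aux_alg W hW1 hW2 hW3 p q]
  have hr : ∀ r : ℝ, r ^ (N - 1) * (2 * (2 * ((N:ℝ) - 4) ^ 2 * lam' ^ (N - 4) *
      (((N : ℝ) + 4) * f (r ^ 2) * deriv f (r ^ 2)
        + 2 * r ^ 2 * f (r ^ 2) * deriv (deriv f) (r ^ 2)))
         / (lam' ^ 2 + r ^ 2) ^ (N - 2) * r ^ 4) = (4 * ((N:ℝ) - 4) ^ 2 * lam' ^ (N - 4)) *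
      ((((N : ℝ) + 4) * f (r ^ 2) * deriv f (r ^ 2)
                    + 2 * r ^ 2 * f (r ^ 2) * deriv (deriv f) (r ^ 2))
                  * r ^ (N + 3) / (lam' ^ 2 + r ^ 2) ^ (N - 2)) := by
    intro r
    have : r ^ (N + 3) = r ^ (N - 1) * r ^ 4 := by
      rw [← pow_add]; congr 1; omega
    rw [this]; ring
  simp_rw [hr]
  rw [integral_const_mul]
  ring
end
end
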